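/- Let R be a commutative ring and x a perfect complex of R-modules that is invertible in the derived category D(R) (i.e., there is a complex y with x ⊗^L_R y ≅ R[0]). Then the total homology ⊕_i H_i(x) is an invertible R-module; in particular each H_i(x) is finitely generated projective, and if Spec(R) is connected then H_i(x) is nonzero in exactly one degree b, with H_b(x) invertible of rank 1. -/

import Mathlib

set_option maxHeartbeats 1000000
set_option synthInstance.maxHeartbeats 1000000

open CategoryTheory CategoryTheory.Limits MonoidalCategory TensorProduct

section Instances

variable {R : Type} [CommRing R]

noncomputable instance curriedTensorAdditive : (curriedTensor (ModuleCat R)).Additive where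
  map_add := by
    intros
    ext Z : 2
    simp [curriedTensor]

noncomputable instance curriedTensorObjAdditive (X : ModuleCat R) :
    ((curriedTensor (ModuleCat R)).obj X).Additive where
  map_add := by
    intros
    simp [curriedTensor]

noncomputable instance curriedTensorObjPreserves (X : ModuleCat R) :
    PreservesColimits ((curriedTensor (ModuleCat R)).obj X) :=
  inferInstanceAs (PreservesColimits (tensorLeft X))

noncomputable instance curriedTensorFlipObjPreserves (X : ModuleCat R) :
    PreservesColimits ((curriedTensor (ModuleCat R)).flip.obj X) :=
  preservesColimits_of_natIso
    (F := tensorLeft X)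
    (NatIso.ofComponents (fun Y => β_ X Y) (by
      intros Y Y' f
      simp [curriedTensor]))

end Instances


namespace Fausk

section Basic
variable {R : Type} [CommRing R]

lemma map_mem {A B : Type} [AddCommGroup A] [Module R A] [AddCommGroup B] [Module R B]
    (I : Ideal R) (T : A →ₗ[R] B) {x : A} (hx : x ∈ I • (⊤ : Submodule R A)) :
    T x ∈ I • (⊤ : Submodule R B) := by
  have : Submodule.map T (I • (⊤ : Submodule R A)) ≤ I • (⊤ : Submodule R B) := by
    rw [Submodule.map_smul'']
    exact Submodule.smul_mono le_rfl le_top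
  exact this ⟨x, hx, rfl⟩

lemma map_mem' {A : Type} [AddCommGroup A] [Module R A]
    (I : Ideal R) (T : A →ₗ[R] R) {x : A} (hx : x ∈ I • (⊤ : Submodule R A)) :
    T x ∈ I := by
  have := map_mem I T hx
  simpa using this

/-- total differential -/
noncomputable def tD {A B : Type} [AddCommGroup A] [Module R A] [AddCommGroup B] [Module R B]
    (d e : A →ₗ[R] A) (d' : B →ₗ[R] B) : A ⊗[R] B →ₗ[R] A ⊗[R] B :=
  TensorProduct.map d LinearMap.id + TensorProduct.map e d'

@[simp] lemma tD_tmul {A B : Type} [AddCommGroup A] [Module R A] [AddCommGroup B] [Module R B]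
    (d e : A →ₗ[R] A) (d' : B →ₗ[R] B) (x : A) (y : B) :
    tD d e d' (x ⊗ₜ y) = d x ⊗ₜ y + e x ⊗ₜ d' y := rfl

end Basic

/-- totalised data of an invertible complex -/
structure Data (R X Y : Type) [CommRing R] [AddCommGroup X] [Module R X]
    [AddCommGroup Y] [Module R Y] where
  d : X →ₗ[R] X
  e : X →ₗ[R] X
  p : ℤ → X →ₗ[R] X
  sgn : ℤ → R
  a : ℤ
  b : ℤ
  dY : Y →ₗ[R] Y
  eY : Y →ₗ[R] Y
  z : X ⊗[R] Y
  f : X ⊗[R] Y →ₗ[R] R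
  dd : ∀ x, d (d x) = 0
  pp : ∀ i x, p i (p i x) = p i x
  pp' : ∀ i j, i ≠ j → ∀ x, p i (p j x) = 0
  psum : ∀ x, ∑ i ∈ Finset.Icc a b, p i x = x
  dp : ∀ i x, d (p i x) = p (i + 1) (d x)
  sgn_succ : ∀ i, sgn (i + 1) = - sgn i
  sgn_sq : ∀ i, sgn i * sgn i = 1
  ep : ∀ i x, e (p i x) = sgn i • p i x
  ddY : ∀ y, dY (dY y) = 0
  eeY : ∀ y, eY (eY y) = y
  edY : ∀ y, eY (dY y) = - dY (eY y)
  Dz : tD d e dY z = 0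
  fD : ∀ w, f (tD d e dY w) = 0
  fz : f z = 1
  Ez : TensorProduct.map e eY z = z
  fE : ∀ w, f (TensorProduct.map e eY w) = f w
  exact : ∀ w, tD d e dY w = 0 →
    ∃ (r : R) (v : X ⊗[R] Y), w = r • z + tD d e dY v

namespace Data

variable {R X Y : Type} [CommRing R] [AddCommGroup X] [Module R X]
    [AddCommGroup Y] [Module R Y] (S : Data R X Y)

lemma p_zero {i : ℤ} (hi : i ∉ Finset.Icc S.a S.b) (x : X) : S.p i x = 0 := by
  conv_lhs => rw [← S.psum x, map_sum]
  refine Finset.sum_eq_zero fun j hj => S.pp' i j ?_ x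
  rintro rfl; exact hi hj

lemma ext_p {B : Type} [AddCommGroup B] [Module R B] {g h : X →ₗ[R] B}
    (H : ∀ i x, g (S.p i x) = h (S.p i x)) (x : X) : g x = h x := by
  rw [← S.psum x, map_sum, map_sum]
  exact Finset.sum_congr rfl fun i _ => H i x

lemma ee (x : X) : S.e (S.e x) = x := by
  refine S.ext_p (g := S.e ∘ₗ S.e) (h := .id) (fun i x => ?_) x
  simp [S.ep, smul_smul, S.sgn_sq]

lemma ed (x : X) : S.e (S.d x) = - S.d (S.e x) := by
  refine S.ext_p (g := S.e ∘ₗ S.d) (h := - S.d ∘ₗ S.e) (fun i x => ?_) x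
  simp [S.ep, S.dp, S.sgn_succ]

lemma eh (h : X →ₗ[R] X) (hh : ∀ j x, h (S.p j x) = S.p (j - 1) (h x)) (x : X) :
    S.e (h x) = - h (S.e x) := by
  refine S.ext_p (g := S.e ∘ₗ h) (h := - h ∘ₗ S.e) (fun i x => ?_) x
  have := S.sgn_succ (i - 1)
  rw [sub_add_cancel] at this
  simp [S.ep, hh, this]

/-- differential on the tensor product -/
noncomputable def D : X ⊗[R] Y →ₗ[R] X ⊗[R] Y := tD S.d S.e S.dY
/-- sign on the tensor product -/
noncomputable def E : X ⊗[R] Y →ₗ[R] X ⊗[R] Y := TensorProduct.map S.e S.eY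

@[simp] lemma D_tmul (x : X) (y : Y) : S.D (x ⊗ₜ y) = S.d x ⊗ₜ y + S.e x ⊗ₜ S.dY y := rfl
@[simp] lemma E_tmul (x : X) (y : Y) : S.E (x ⊗ₜ y) = S.e x ⊗ₜ S.eY y := rfl

lemma DD (w) : S.D (S.D w) = 0 := by
  induction w with
  | zero => simp
  | add x y hx hy => simp [hx, hy]
  | tmul x y => simp [S.dd, S.ddY, S.ed, TensorProduct.neg_tmul]

lemma EE (w) : S.E (S.E w) = w := by
  induction w with
  | zero => simp
  | add x y hx hy => simp [hx, hy]
  | tmul x y => simp [S.ee, S.eeY]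

lemma ED (w) : S.E (S.D w) = - S.D (S.E w) := by
  induction w with
  | zero => simp
  | add x y hx hy => simp [hx, hy]; abel
  | tmul x y => simp [S.ed, S.edY, TensorProduct.neg_tmul, TensorProduct.tmul_neg]; abel

end Data

section Homotopy
variable {R X Y : Type} [CommRing R] [AddCommGroup X] [Module R X]
    [AddCommGroup Y] [Module R Y] (S : Data R X Y)
    {K : Type} [AddCommGroup K] [Module R K]

lemma nullhomotopy [Module.Projective R X] (D : K →ₗ[R] K) (hDD : ∀ w, D (D w) = 0)
    (hex : ∀ w, D w = 0 → ∃ v, D v = w) (g : X →ₗ[R] K) (hg : ∀ x, D (g x) = g (S.d x)) :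
    ∃ s : X →ₗ[R] K, ∀ x, D (s x) + s (S.d x) = g x := by
  have key : ∀ n : ℕ, ∃ s : X →ₗ[R] K, ∀ j : ℤ, S.b - n < j → ∀ x,
      D (s (S.p j x)) + s (S.d (S.p j x)) = g (S.p j x) := by
    intro n
    induction n with
    | zero =>
      refine ⟨0, fun j hj x => ?_⟩
      rw [S.p_zero (by simp at hj ⊢; omega)]; simp
    | succ n ih =>
      obtain ⟨s, hs⟩ := ih
      set j0 : ℤ := S.b - n with hj0
      let u : X →ₗ[R] K := (g - D ∘ₗ s - s ∘ₗ S.d) ∘ₗ S.p j0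
      have hu : ∀ x, u x ∈ LinearMap.range D := by
        intro x
        obtain ⟨v, hv⟩ := hex (u x) (by
          have := hs (j0 + 1) (by omega) (S.d x)
          rw [← S.dp, S.dd] at this
          simp only [map_zero, add_zero] at this
          simp [u, hDD, hg, this])
        exact ⟨v, hv⟩
      obtain ⟨t, ht⟩ := Module.projective_lifting_property D.rangeRestrict
        (u.codRestrict _ hu) D.surjective_rangeRestrict
      have ht' : ∀ x, D (t x) = u x := fun x => by
        have := congrArg Subtype.val (LinearMap.congr_fun ht x)
        simpa using this
      refine ⟨s + t ∘ₗ S.p j0, fun j hj x => ?_⟩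
      have h1 : S.p j0 (S.d (S.p j x)) = 0 := by
        rw [S.dp]; exact S.pp' _ _ (by push_cast at hj; omega) _
      rcases eq_or_ne j j0 with rfl | hne
      · simp [h1, ht', u, S.pp]; abel
      · simp [h1, S.pp' j0 j hne.symm, hs j (by push_cast at hj; omega)]
  obtain ⟨s, hs⟩ := key (S.b - S.a + 1).toNat
  refine ⟨s, fun x => S.ext_p (g := D ∘ₗ s + s ∘ₗ S.d) (h := g) (fun i x => ?_) x⟩
  by_cases hi : i ∈ Finset.Icc S.a S.b
  · exact hs i (by simp at hi; omega) x
  · simp [S.p_zero hi]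

lemma tensor_exact [Module.Flat R X] (D E : K →ₗ[R] K) (hDD : ∀ w, D (D w) = 0)
    (hED : ∀ w, E (D w) = - D (E w))
    (hex : ∀ w, D w = 0 → ∃ v, D v = w) (t : K ⊗[R] X)
    (ht : tD D E S.d t = 0) :
    ∃ s, tD D E S.d s = t := by
  set D' := tD D E S.d with hD'
  have D't : ∀ k x, D' (k ⊗ₜ x) = D k ⊗ₜ x + E k ⊗ₜ S.d x := fun _ _ => rfl
  have hD'D' : ∀ w, D' (D' w) = 0 := by
    intro w
    induction w with
    | zero => simp
    | add x y hx hy => simp [hx, hy]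
    | tmul x y => simp [D't, S.dd, hDD, hED, TensorProduct.neg_tmul]
  have hpD : ∀ j w, (S.p (j+1)).lTensor K (D' w) =
      D.rTensor X ((S.p (j+1)).lTensor K w) + TensorProduct.map E S.d ((S.p j).lTensor K w) := by
    intro j w
    induction w with
    | zero => simp
    | add x y hx hy => simp only [map_add, hx, hy]; abel
    | tmul x y => simp [D't, S.dp]
  have hDp : ∀ j w, D' ((S.p j).lTensor K w) = (S.p j).lTensor K (D.rTensor X w) +
      (S.p (j+1)).lTensor K (TensorProduct.map E S.d w) := by
    intro j w
    induction w with
    | zero => simp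
    | add x y hx hy => simp only [map_add, hx, hy]; abel
    | tmul x y => simp [D't, S.dp]
  have hpp : ∀ i w, (S.p i).lTensor K ((S.p i).lTensor K w) = (S.p i).lTensor K w := by
    intro i w
    induction w with
    | zero => simp
    | add x y hx hy => simp only [map_add, hx, hy]
    | tmul x y => simp [S.pp]
  have hpp' : ∀ i j, i ≠ j → ∀ w, (S.p i).lTensor K ((S.p j).lTensor K w) = 0 := by
    intro i j hij w
    induction w with
    | zero => simp
    | add x y hx hy => simp only [map_add, hx, hy, add_zero]
    | tmul x y => simp [S.pp' i j hij]
  have hex' : ∀ w, D.rTensor X w = 0 → ∃ v, D.rTensor X v = w := by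
    have : Function.Exact D D := fun w => ⟨fun h => hex w h, by rintro ⟨v, rfl⟩; exact hDD v⟩
    have := Module.Flat.rTensor_exact X this
    exact fun w hw => (this w).1 hw
  have key : ∀ n : ℕ, ∃ s, ∀ j : ℤ, j < S.a + n → (S.p j).lTensor K (t - D' s) = 0 := by
    intro n
    induction n with
    | zero =>
      refine ⟨0, fun j hj => ?_⟩
      have : S.p j = 0 := by ext x; exact S.p_zero (by simp at hj ⊢; omega) x
      simp [this]
    | succ n ih =>
      obtain ⟨s, hs⟩ := ih
      set j0 : ℤ := S.a + n with hj0
      set t' := t - D' s with ht'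
      have h0 : D' t' = 0 := by simp [ht', ht, hD'D']
      have h1 : D.rTensor X ((S.p j0).lTensor K t') = 0 := by
        have := hpD (j0 - 1) t'
        rw [h0, hs (j0-1) (by omega)] at this
        simpa using this.symm
      obtain ⟨v, hv⟩ := hex' _ h1
      refine ⟨s + (S.p j0).lTensor K v, fun j hj => ?_⟩
      rw [map_add, ← sub_sub, ← ht', hDp, hv, hpp, map_sub, map_add, hpp' j (j0+1)
        (by push_cast at hj; omega), add_zero]
      rcases eq_or_ne j j0 with rfl | hne
      · rw [hpp, sub_self]
      · rw [hpp' _ _ hne, hs j (by push_cast at hj; omega), sub_zero]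
  obtain ⟨s, hs⟩ := key (S.b - S.a + 1).toNat
  refine ⟨s, ?_⟩
  have hsum : ∀ w : K ⊗[R] X, ∑ i ∈ Finset.Icc S.a S.b, (S.p i).lTensor K w = w := by
    intro w
    induction w with
    | zero => simp
    | add x y hx hy => simp only [map_add, Finset.sum_add_distrib, hx, hy]
    | tmul x y => simp [← TensorProduct.tmul_sum, S.psum]
  have := hsum (t - D' s)
  rw [Finset.sum_eq_zero (fun i hi => hs i (by simp at hi; omega))] at this
  exact (sub_eq_zero.1 this.symm).symm

end Homotopy
end Fausk

namespace Fausk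
namespace Data

variable {R X Y : Type} [CommRing R] [AddCommGroup X] [Module R X]
    [AddCommGroup Y] [Module R Y] (S : Data R X Y)

lemma D_z : S.D S.z = 0 := S.Dz
lemma f_D (w) : S.f (S.D w) = 0 := S.fD w

/-- `contr c (x ⊗ w) = f (c ⊗ w) x` -/
noncomputable def contr (c : X) : X ⊗[R] Y →ₗ[R] X :=
  TensorProduct.lift (LinearMap.mk₂ R (fun x w => S.f (c ⊗ₜ w) • x)
    (by intros; simp) (by intros; exact smul_comm _ _ _) (by intros; simp [TensorProduct.tmul_add, add_smul])
    (by intros; simp [mul_smul]))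

@[simp] lemma contr_tmul (c x : X) (w : Y) : S.contr c (x ⊗ₜ w) = S.f (c ⊗ₜ w) • x := rfl

lemma contr_add (c c' : X) (t) : S.contr (c + c') t = S.contr c t + S.contr c' t := by
  induction t with
  | zero => simp
  | add x y hx hy => simp only [map_add, hx, hy]; abel
  | tmul x y => simp [TensorProduct.add_tmul, add_smul]

lemma contr_smul (r : R) (c : X) (t) : S.contr (r • c) t = r • S.contr c t := by
  induction t with
  | zero => simp
  | add x y hx hy => simp only [map_add, hx, hy, smul_add]
  | tmul x y => simp [← TensorProduct.smul_tmul', mul_smul]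

/-- the sign-twisted element -/
noncomputable def z' : X ⊗[R] Y := S.e.rTensor Y S.z

/-- the endomorphism ψ -/
noncomputable def psi : X →ₗ[R] X where
  toFun c := S.contr c S.z'
  map_add' c c' := S.contr_add c c' _
  map_smul' r c := S.contr_smul r c _

lemma psi_apply (c : X) : S.psi c = S.contr c S.z' := rfl

lemma e_contr (c : X) (t) : S.contr c (S.e.rTensor Y t) = S.e (S.contr c t) := by
  induction t with
  | zero => simp
  | add x y hx hy => simp only [map_add, hx, hy]
  | tmul x y => simp

lemma e_psi (c : X) : S.e (S.psi c) = S.contr c S.z := by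
  rw [psi_apply, z', e_contr, S.ee]

lemma z'_eq : S.z' = S.eY.lTensor X S.z := by
  have h : ∀ t, S.e.rTensor Y (S.E t) = S.eY.lTensor X t := by
    intro t
    induction t with
    | zero => simp
    | add x y hx hy => simp only [map_add, hx, hy]
    | tmul x y => simp [S.ee]
  have : S.E S.z = S.z := S.Ez
  rw [← h, this]; rfl

/-- The map `a ↦ a ⊗ z'` -/
noncomputable def Gt (t : X ⊗[R] Y) : X →ₗ[R] (X ⊗[R] Y) ⊗[R] X :=
  (TensorProduct.assoc R X Y X).symm.toLinearMap ∘ₗ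
    (TensorProduct.mk R X (Y ⊗[R] X)).flip (TensorProduct.comm R X Y t)

@[simp] lemma Gt_tmul (x : X) (y : Y) (a : X) : Gt (x ⊗ₜ[R] y) a = (a ⊗ₜ y) ⊗ₜ x := by
  simp [Gt]
@[simp] lemma Gt_add (t t' : X ⊗[R] Y) (a : X) : Gt (t + t') a = Gt t a + Gt t' a := by
  simp [Gt, TensorProduct.tmul_add]
@[simp] lemma Gt_zero (a : X) : Gt (0 : X ⊗[R] Y) a = 0 := by
  simp [Gt]

/-- differential on `(X ⊗ Y) ⊗ X` -/
noncomputable def D3 : (X ⊗[R] Y) ⊗[R] X →ₗ[R] (X ⊗[R] Y) ⊗[R] X := tD S.D S.E S.d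

@[simp] lemma D3_tmul (w) (x : X) : S.D3 (w ⊗ₜ x) = S.D w ⊗ₜ x + S.E w ⊗ₜ S.d x := rfl

lemma D3_Gt (t) (a : X) : S.D3 (Gt t a) = Gt t (S.d a) +
    Gt (S.dY.lTensor X t) (S.e a) + Gt (TensorProduct.map S.d S.eY t) (S.e a) := by
  induction t with
  | zero => simp
  | add x y hx hy => simp only [map_add, Gt_add, hx, hy]; abel
  | tmul x y => simp [TensorProduct.add_tmul]

/-- `G` -/
noncomputable def G : X →ₗ[R] (X ⊗[R] Y) ⊗[R] X := Gt S.z'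

lemma D3_G (a : X) : S.D3 (S.G a) = S.G (S.d a) := by
  rw [G, D3_Gt, add_assoc, ← Gt_add]
  have : S.dY.lTensor X S.z' + TensorProduct.map S.d S.eY S.z' = 0 := by
    rw [← S.D_z]
    nth_rw 2 [z'_eq]
    rw [z']
    have : ∀ t, S.dY.lTensor X (S.e.rTensor Y t) +
      TensorProduct.map S.d S.eY (S.eY.lTensor X t) = S.D t := by
      intro t
      induction t with
      | zero => simp
      | add x y hx hy => simp only [map_add, ← hx, ← hy]; abel
      | tmul x y => simp [S.eeY, add_comm]
    exact this _
  rw [this]; simp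

/-- `f ⊗ 1` -/
noncomputable def f1 : (X ⊗[R] Y) ⊗[R] X →ₗ[R] X :=
  (TensorProduct.lid R X).toLinearMap ∘ₗ S.f.rTensor X

@[simp] lemma f1_tmul (w) (x : X) : S.f1 (w ⊗ₜ x) = S.f w • x := by simp [f1]

lemma f1_G (a : X) : S.f1 (S.G a) = S.psi a := by
  rw [psi_apply, G]
  induction S.z' with
  | zero => simp
  | add x y hx hy => simp only [map_add, Gt_add, hx, hy]
  | tmul x y => simp

lemma f1_D3 (w) : S.f1 (S.D3 w) = S.d (S.f1 w) := by
  induction w with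
  | zero => simp
  | add x y hx hy => simp only [map_add, hx, hy]
  | tmul x y =>
    have : S.f (S.E x) = S.f x := S.fE x
    simp [f_D, this]

lemma d_psi (a : X) : S.d (S.psi a) = S.psi (S.d a) := by
  rw [← S.f1_G a, ← S.f1_G (S.d a), ← f1_D3, D3_G]

/-- The main homotopy. -/
lemma homotopy [Module.Projective R X] : ∃ s : X →ₗ[R] (X ⊗[R] Y) ⊗[R] X,
    ∀ a, S.D3 (s a) + s (S.d a) = S.G a - S.z ⊗ₜ S.psi a := by
  let DK : ((X ⊗[R] Y) × R) →ₗ[R] ((X ⊗[R] Y) × R) := (LinearMap.coprod S.D (LinearMap.toSpanSingleton R _ S.z)).prod 0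
  let EK : ((X ⊗[R] Y) × R) →ₗ[R] ((X ⊗[R] Y) × R) := S.E.prodMap (-LinearMap.id)
  have DK_apply : ∀ k, DK k = (S.D k.1 + k.2 • S.z, 0) := fun k => by simp [DK]; try rfl
  have EK_apply : ∀ k, EK k = (S.E k.1, - k.2) := fun k => by simp [EK]; try rfl
  have hE : S.E S.z = S.z := S.Ez
  have hDD : ∀ w, DK (DK w) = 0 := by intro w; simp [DK_apply, S.DD, S.D_z]
  have hED : ∀ w, EK (DK w) = - DK (EK w) := by
    intro w; simp [DK_apply, EK_apply, S.ED, hE, add_comm]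
  have hex : ∀ w, DK w = 0 → ∃ v, DK v = w := by
    rintro ⟨w, r⟩ hw
    simp only [DK_apply, Prod.mk_eq_zero, and_true] at hw
    have h1 := congrArg S.f hw
    simp only [map_add, f_D, map_smul, S.fz, zero_add, smul_eq_mul, mul_one, map_zero] at h1
    subst h1
    obtain ⟨r, v, hv⟩ := S.exact w (by rw [zero_smul, add_zero] at hw; exact hw)
    refine ⟨(v, r), ?_⟩
    rw [DK_apply, hv, add_comm]; rfl
  let ι : X ⊗[R] Y →ₗ[R] ((X ⊗[R] Y) × R) := LinearMap.inl R _ _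
  let q : ((X ⊗[R] Y) × R) →ₗ[R] X ⊗[R] Y :=
    (LinearMap.id - LinearMap.toSpanSingleton R _ S.z ∘ₗ S.f) ∘ₗ LinearMap.fst R _ _
  have hq : ∀ k, q (DK k) = S.D (q k) := by
    intro k; simp [q, DK_apply, f_D, S.fz, S.D_z]
  have hqE : ∀ k, q (EK k) = S.E (q k) := by
    intro k
    have : S.f (S.E k.1) = S.f k.1 := S.fE k.1
    simp [q, EK_apply, this, hE]
  let D4 := tD DK EK S.d
  have hD4 : ∀ w, D4 (D4 w) = 0 := by
    intro w
    induction w with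
    | zero => simp
    | add x y hx hy => simp [hx, hy]
    | tmul x y => simp [D4, S.dd, hDD, hED, TensorProduct.neg_tmul]
  have hι : ∀ w, D4 (ι.rTensor X w) = ι.rTensor X (S.D3 w) := by
    intro w
    induction w with
    | zero => simp
    | add x y hx hy => simp only [map_add, hx, hy]
    | tmul x y => simp [D4, ι, DK_apply, EK_apply]
  have hq4 : ∀ w, q.rTensor X (D4 w) = S.D3 (q.rTensor X w) := by
    intro w
    induction w with
    | zero => simp
    | add x y hx hy => simp only [map_add, hx, hy]
    | tmul x y => simp [D4, hq, hqE]
  obtain ⟨s, hs⟩ := nullhomotopy S D4 hD4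
    (fun t ht => tensor_exact S DK EK hDD hED hex t ht) (ι.rTensor X ∘ₗ S.G)
    (fun x => by simp [hι, D3_G])
  refine ⟨q.rTensor X ∘ₗ s, fun a => ?_⟩
  have := congrArg (q.rTensor X) (hs a)
  rw [map_add, hq4] at this
  simp only [LinearMap.comp_apply]
  rw [this, ← f1_G, LinearMap.comp_apply]
  induction S.G a with
  | zero => simp
  | add x y hx hy => simp only [map_add, hx, hy, TensorProduct.tmul_add]; abel
  | tmul x y => simp [q, ι, TensorProduct.sub_tmul, TensorProduct.smul_tmul]

/-- double contraction -/
noncomputable def kap (c : X) (μ : X →ₗ[R] R) : (X ⊗[R] Y) ⊗[R] X →ₗ[R] X :=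
  (TensorProduct.rid R X).toLinearMap ∘ₗ TensorProduct.map (S.contr c) μ

@[simp] lemma kap_tmul (c : X) (μ : X →ₗ[R] R) (w) (x : X) :
    S.kap c μ (w ⊗ₜ x) = μ x • S.contr c w := by simp [kap]

lemma kap_G (c : X) (μ : X →ₗ[R] R) (a : X) : S.kap c μ (S.G a) = μ (S.psi c) • a := by
  rw [psi_apply, G]
  induction S.z' with
  | zero => simp
  | add x y hx hy => simp only [map_add, Gt_add, hx, hy, add_smul]
  | tmul x y => simp [smul_smul, mul_comm]

lemma f_dY (I : Ideal R) (c : X) (hc : S.d c ∈ I • (⊤ : Submodule R X)) (w : Y) :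
    S.f (c ⊗ₜ S.dY w) ∈ I := by
  have h := S.f_D (S.e c ⊗ₜ w)
  rw [D_tmul, S.ee, map_add] at h
  have h2 : S.f (c ⊗ₜ S.dY w) = S.f (S.e (S.d c) ⊗ₜ w) := by
    rw [S.ed, TensorProduct.neg_tmul, map_neg]; exact eq_neg_of_add_eq_zero_right h
  rw [h2]
  exact map_mem' I (S.f ∘ₗ (TensorProduct.mk R X Y).flip w) (map_mem I S.e hc)

lemma kap_D3 (I : Ideal R) (c : X) (μ : X →ₗ[R] R)
    (hc : S.d c ∈ I • (⊤ : Submodule R X)) (hμ : ∀ x, μ (S.d x) ∈ I) (t) :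
    S.kap c μ (S.D3 t) - S.d (S.kap c μ t) ∈ I • (⊤ : Submodule R X) := by
  induction t with
  | zero => simp
  | add x y hx hy =>
    simp only [map_add]
    convert add_mem hx hy using 1; abel
  | tmul w x =>
    rw [D3_tmul, map_add, kap_tmul, kap_tmul, kap_tmul, map_smul]
    have h1 : S.contr c (S.D w) - S.d (S.contr c w) ∈ I • (⊤ : Submodule R X) := by
      induction w with
      | zero => simp
      | add x y hx hy =>
        simp only [map_add]
        convert add_mem hx hy using 1; abel
      | tmul x' y =>
        simp only [D_tmul, map_add, contr_tmul, map_smul, add_sub_cancel_left]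
        exact Submodule.smul_mem_smul (S.f_dY I c hc y) trivial
    have h2 := Submodule.smul_mem _ (μ x) h1
    have h3 : μ (S.d x) • S.contr c (S.E w) ∈ I • (⊤ : Submodule R X) :=
      Submodule.smul_mem_smul (hμ x) trivial
    convert add_mem h2 h3 using 1
    rw [smul_sub]; abel

lemma star [Module.Projective R X] (I : Ideal R) (a c : X) (μ : X →ₗ[R] R)
    (ha : S.d a ∈ I • (⊤ : Submodule R X))
    (hc : S.d c ∈ I • (⊤ : Submodule R X)) (hμ : ∀ x, μ (S.d x) ∈ I) :
    ∃ y, μ (S.psi c) • a - μ (S.psi a) • S.e (S.psi c) - S.d y ∈ I • (⊤ : Submodule R X) := by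
  obtain ⟨s, hs⟩ := S.homotopy
  refine ⟨S.kap c μ (s a), ?_⟩
  have h := congrArg (S.kap c μ) (hs a)
  rw [map_sub, map_add, kap_G, kap_tmul, ← e_psi] at h
  rw [← h, add_sub_right_comm]
  exact add_mem (S.kap_D3 I c μ hc hμ _) (map_mem I (S.kap c μ ∘ₗ s) ha)

/-- second contraction -/
noncomputable def eta : (X ⊗[R] Y) ⊗[R] X →ₗ[R] X :=
  TensorProduct.lift (LinearMap.mk₂ R (fun w x => S.contr (S.e x) w)
    (by intros; simp) (by intros; simp) (by intros; simp [contr_add])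
    (by intros; simp [contr_smul]))

@[simp] lemma eta_tmul (w) (x : X) : S.eta (w ⊗ₜ x) = S.contr (S.e x) w := rfl

lemma eta_G (a : X) : S.eta (S.G a) = a := by
  have : ∀ t, S.eta (Gt t a) = S.f (S.e.rTensor Y t) • a := by
    intro t
    induction t with
    | zero => simp
    | add x y hx hy => simp only [map_add, Gt_add, hx, hy, add_smul]
    | tmul x y => simp
  have h2 : ∀ t, S.e.rTensor Y (S.e.rTensor Y t) = t := by
    intro t
    induction t with
    | zero => simp
    | add x y hx hy => simp only [map_add, hx, hy]
    | tmul x y => simp [S.ee]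
  rw [G, this, z', h2, S.fz, one_smul]

lemma eta_D3 (t) : S.eta (S.D3 t) = S.d (S.eta t) := by
  induction t with
  | zero => simp
  | add x y hx hy => simp only [map_add, hx, hy]
  | tmul w x =>
    induction w with
    | zero => simp
    | add x y hx hy => simp only [map_add, hx, hy, TensorProduct.add_tmul]
    | tmul x' y =>
      have h := S.f_D (x ⊗ₜ y)
      have h2 : S.f (S.e (S.d x) ⊗ₜ S.eY y) = S.f (S.d x ⊗ₜ y) := S.fE (S.d x ⊗ₜ y)
      rw [D_tmul, map_add] at h
      simp only [D3_tmul, map_add, eta_tmul, D_tmul, contr_tmul, E_tmul, h2, map_smul, add_assoc,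
        ← add_smul, add_eq_left]
      rw [add_comm, h, zero_smul]

lemma starstar [Module.Projective R X] (I : Ideal R) (a : X)
    (ha : S.d a ∈ I • (⊤ : Submodule R X)) :
    ∃ y, a - S.e (S.psi (S.e (S.psi a))) - S.d y ∈ I • (⊤ : Submodule R X) := by
  obtain ⟨s, hs⟩ := S.homotopy
  refine ⟨S.eta (s a), ?_⟩
  have h := congrArg S.eta (hs a)
  rw [map_sub, map_add, eta_G, eta_tmul, ← e_psi, eta_D3] at h
  rw [← h, add_sub_cancel_left]
  exact map_mem I (S.eta ∘ₗ s) ha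

end Data
end Fausk

namespace Fausk

section LinAlg
variable {R X : Type} [CommRing R] [AddCommGroup X] [Module R X]

lemma exists_functional [Module.Projective R X] (m : Ideal R) [hm : m.IsMaximal]
    (N : Submodule R X) (hN : m • (⊤ : Submodule R X) ≤ N) (a : X) (ha : a ∉ N) :
    ∃ l : X →ₗ[R] R, (∀ x ∈ N, l x ∈ m) ∧ l a ∉ m := by
  let := Ideal.Quotient.field m
  have ht : Module.IsTorsionBySet R (X ⧸ N) (m : Set R) := by
    intro x r
    obtain ⟨x, rfl⟩ := N.mkQ_surjective x
    rw [← map_smul, Submodule.mkQ_apply, Submodule.Quotient.mk_eq_zero]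
    exact hN (Submodule.smul_mem_smul r.2 trivial)
  let : Module (R ⧸ m) (X ⧸ N) := ht.module
  have : IsScalarTower R (R ⧸ m) (X ⧸ N) := ht.isScalarTower
  have hna : N.mkQ a ≠ 0 := by
    rw [Submodule.mkQ_apply, Ne, Submodule.Quotient.mk_eq_zero]; exact ha
  obtain ⟨g, hg⟩ : ∃ g : Module.Dual (R ⧸ m) (X ⧸ N), g (N.mkQ a) ≠ 0 := by
    by_contra! h
    exact hna ((Module.forall_dual_apply_eq_zero_iff (R ⧸ m) _).1 h)
  obtain ⟨l, hl⟩ := Module.projective_lifting_property (R := R) (Submodule.mkQ m)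
    ((g.restrictScalars R) ∘ₗ N.mkQ) (Submodule.mkQ_surjective m)
  have hl' : ∀ x, Ideal.Quotient.mk m (l x) = g (N.mkQ x) := fun x => LinearMap.congr_fun hl x
  refine ⟨l, fun x hx => ?_, fun h => hg ?_⟩
  · rw [← Ideal.Quotient.eq_zero_iff_mem, hl']
    have : N.mkQ x = 0 := by rwa [Submodule.mkQ_apply, Submodule.Quotient.mk_eq_zero]
    rw [this, map_zero]
  · rw [← hl', Ideal.Quotient.eq_zero_iff_mem]; exact h

lemma exists_regular {k V : Type} [Field k] [AddCommGroup V] [Module k V] (d : V →ₗ[k] V) :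
    ∃ h : V →ₗ[k] V, ∀ v, d (h (d v)) = d v := by
  obtain ⟨s, hs⟩ := d.rangeRestrict.exists_rightInverse_of_surjective d.range_rangeRestrict
  obtain ⟨q, hq⟩ := (LinearMap.range d).subtype.exists_leftInverse_of_injective
    (LinearMap.range d).ker_subtype
  refine ⟨s ∘ₗ q, fun v => ?_⟩
  have h1 : q (d v) = d.rangeRestrict v := LinearMap.congr_fun hq (d.rangeRestrict v)
  have h2 := LinearMap.congr_fun hs (d.rangeRestrict v)
  rw [LinearMap.comp_apply, h1]
  exact congrArg Subtype.val h2

lemma exists_regular_lift [Module.Projective R X] (m : Ideal R) [hm : m.IsMaximal]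
    (d : X →ₗ[R] X) :
    ∃ h : X →ₗ[R] X, ∀ x, d (h (d x)) - d x ∈ m • (⊤ : Submodule R X) := by
  let := Ideal.Quotient.field m
  let N := m • (⊤ : Submodule R X)
  let dq : (X ⧸ N) →ₗ[R] (X ⧸ N) := N.mapQ N d (fun x hx => map_mem m d hx)
  obtain ⟨h0, hh0⟩ := exists_regular (k := R ⧸ m)
    (dq.extendScalarsOfSurjective (S := R ⧸ m) Ideal.Quotient.mk_surjective)
  obtain ⟨h, hh⟩ := Module.projective_lifting_property (R := R) N.mkQ
    ((h0.restrictScalars R) ∘ₗ N.mkQ) N.mkQ_surjective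
  have hh' : ∀ x, N.mkQ (h x) = h0 (N.mkQ x) := fun x => LinearMap.congr_fun hh x
  have hd : ∀ x, N.mkQ (d x) = dq (N.mkQ x) := fun x => rfl
  refine ⟨h, fun x => ?_⟩
  have : N.mkQ (d (h (d x)) - d x) = 0 := by
    rw [map_sub, hd, hh', hd, sub_eq_zero]
    exact hh0 (N.mkQ x)
  rwa [Submodule.mkQ_apply, Submodule.Quotient.mk_eq_zero] at this

open Polynomial in
lemma cayley [Module.Finite R X] (m : Ideal R) [hm : m.IsMaximal]
    (g : X →ₗ[R] X) (hg : ∀ x, g x ∈ m • (⊤ : Submodule R X)) :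
    ∃ (P q : R[X]) (r : R), r ∉ m ∧ aeval g P = 0 ∧ P = (Polynomial.X - C 1) * q + C r := by
  obtain ⟨P, hP, -, hc, h0⟩ :=
    LinearMap.exists_monic_and_natDegree_eq_and_coeff_mem_pow_and_aeval_eq_zero
      R g m (by rintro _ ⟨x, rfl⟩; exact hg x)
  refine ⟨P, P /ₘ (Polynomial.X - C 1), P.eval 1, ?_, h0, ?_⟩
  · intro h
    rw [Polynomial.eval_eq_sum_range, Finset.sum_range_succ] at h
    have h1 : ∑ k ∈ Finset.range P.natDegree, P.coeff k * 1 ^ k ∈ m := by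
      refine sum_mem fun k hk => ?_
      rw [one_pow, mul_one]
      rw [Finset.mem_range] at hk
      exact Ideal.pow_le_self (by omega) (hc k)
    have h2 := (Submodule.add_mem_iff_right m h1).1 h
    rw [one_pow, mul_one, hP.coeff_natDegree] at h2
    exact hm.ne_top ((Ideal.eq_top_iff_one m).2 h2)
  · rw [X_sub_C_mul_divByMonic_eq_sub_modByMonic, modByMonic_X_sub_C_eq_C_eval, sub_add_cancel]

end LinAlg

namespace Data

variable {R X Y : Type} [CommRing R] [AddCommGroup X] [Module R X]
    [AddCommGroup Y] [Module R Y] (S : Data R X Y)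

lemma cong [Module.Projective R X] (I : Ideal R) (l : X →ₗ[R] R) (hl : ∀ x, l (S.d x) ∈ I)
    (a : X) (ha : S.d a ∈ I • (⊤ : Submodule R X)) :
    l a - l (S.e (S.psi (S.e (S.psi a)))) ∈ I := by
  obtain ⟨y, hy⟩ := S.starstar I a ha
  have := add_mem (map_mem' I l hy) (hl y)
  simpa using this

lemma d_epsi (a : X) : S.d (S.e (S.psi a)) = - S.e (S.psi (S.d a)) := by
  rw [← d_psi, S.ed, neg_neg]

lemma d_epsi_mem (I : Ideal R) (a : X) (ha : S.d a ∈ I • (⊤ : Submodule R X)) :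
    S.d (S.e (S.psi a)) ∈ I • (⊤ : Submodule R X) := by
  rw [d_epsi]
  exact neg_mem (map_mem I (S.e ∘ₗ S.psi) ha)

lemma cross [Module.Projective R X] (I : Ideal R) (l μ : X →ₗ[R] R)
    (hl : ∀ x, l (S.d x) ∈ I) (hμ : ∀ x, μ (S.d x) ∈ I)
    (a c : X) (ha : S.d a ∈ I • (⊤ : Submodule R X)) (hc : S.d c ∈ I • (⊤ : Submodule R X)) :
    l a * μ c - l c * μ (S.e (S.psi a)) ∈ I := by
  obtain ⟨y, hy⟩ := S.star I a (S.e (S.psi c)) (μ ∘ₗ S.e) ha (S.d_epsi_mem I c hc)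
    (fun x => by rw [LinearMap.comp_apply, S.ed, map_neg]; exact neg_mem (hμ _))
  have h1 := add_mem (map_mem' I l hy) (hl y)
  have h2 := I.mul_mem_left (l a) (S.cong I μ hμ c hc)
  have h3 := I.mul_mem_left (μ (S.e (S.psi a))) (S.cong I l hl c hc)
  have h4 := sub_mem (add_mem h1 h2) h3
  simp only [map_sub, map_smul, LinearMap.comp_apply, smul_eq_mul, sub_add_cancel] at h4
  convert h4 using 1
  ring

/-- degrees where the homology modulo `m` is nonzero -/
def Supp (m : Ideal R) (j : ℤ) : Prop :=
  ∃ a, S.p j a = a ∧ S.d a ∈ m • (⊤ : Submodule R X) ∧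
    a ∉ LinearMap.range S.d ⊔ m • (⊤ : Submodule R X)

lemma supp_functional [Module.Projective R X] (m : Ideal R) [hm : m.IsMaximal] {i : ℤ}
    (hi : S.Supp m i) : ∃ (a : X) (l : X →ₗ[R] R), S.p i a = a ∧
      S.d a ∈ m • (⊤ : Submodule R X) ∧ (∀ x, l (S.p i x) = l x) ∧ (∀ x, l (S.d x) ∈ m) ∧
      l a ∉ m := by
  obtain ⟨a, ha, hda, hna⟩ := hi
  obtain ⟨l, hl, hla⟩ := exists_functional m _ le_sup_right a hna
  refine ⟨a, l ∘ₗ S.p i, ha, hda, fun x => by simp [S.pp], fun x => ?_, by simpa [ha] using hla⟩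
  have := S.dp (i - 1) x
  rw [sub_add_cancel] at this
  rw [LinearMap.comp_apply, ← this]
  exact hl _ (Submodule.mem_sup_left ⟨_, rfl⟩)

lemma supp_unique [Module.Projective R X] (m : Ideal R) [hm : m.IsMaximal] {i j : ℤ}
    (hi : S.Supp m i) (hj : S.Supp m j) : i = j := by
  by_contra hij
  obtain ⟨a, l, ha, hda, hlp, hld, hla⟩ := S.supp_functional m hi
  obtain ⟨c, μ, hc, hdc, hμp, hμd, hμc⟩ := S.supp_functional m hj
  have := S.cross m l μ hld hμd a c hda hdc
  rw [← hlp c, ← hc, S.pp' i j hij, map_zero, zero_mul, sub_zero, hc] at this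
  rcases hm.isPrime.mem_or_mem this with h | h
  · exact hla h
  · exact hμc h

lemma exists_h [Module.Projective R X] (m : Ideal R) [hm : m.IsMaximal] :
    ∃ h : X →ₗ[R] X, (∀ j x, h (S.p j x) = S.p (j - 1) (h x)) ∧
      ∀ j, ¬ S.Supp m j → ∀ x, S.d (h (S.p j x)) + h (S.d (S.p j x)) - S.p j x
        ∈ m • (⊤ : Submodule R X) := by
  obtain ⟨h, hh⟩ := exists_regular_lift m S.d
  let h1 : X →ₗ[R] X := ∑ j ∈ Finset.Icc S.a S.b, S.p (j - 1) ∘ₗ h ∘ₗ S.p j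
  have e0 : ∀ j x, h1 (S.p j x) = S.p (j - 1) (h (S.p j x)) := by
    intro j x
    simp only [h1, LinearMap.sum_apply, LinearMap.comp_apply]
    by_cases hj : j ∈ Finset.Icc S.a S.b
    · rw [Finset.sum_eq_single_of_mem j hj, S.pp]
      intro k _ hk
      rw [S.pp' _ _ hk]; simp
    · rw [S.p_zero hj]; simp
  have e1 : ∀ j x, h1 (S.p j x) = S.p (j - 1) (h1 x) := by
    intro j x
    rw [e0]
    simp only [h1, LinearMap.sum_apply, LinearMap.comp_apply, map_sum]
    by_cases hj : j ∈ Finset.Icc S.a S.b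
    · rw [Finset.sum_eq_single_of_mem j hj, S.pp]
      intro k _ hk
      rw [S.pp' _ _ (by omega)]
    · rw [S.p_zero hj, map_zero, map_zero, Finset.sum_eq_zero]
      intro k hk
      rw [S.pp' _ _ (by rintro h; apply hj; convert hk using 1; omega)]
  have hmk : ∀ x : X, (m • (⊤ : Submodule R X)).mkQ x = 0 ↔ x ∈ m • (⊤ : Submodule R X) := by
    intro x; rw [Submodule.mkQ_apply, Submodule.Quotient.mk_eq_zero]
  have e2 : ∀ x, S.d (h1 (S.d x)) - S.d x ∈ m • (⊤ : Submodule R X) := by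
    intro x
    rw [← hmk]
    refine S.ext_p (g := (m • (⊤ : Submodule R X)).mkQ ∘ₗ (S.d ∘ₗ h1 ∘ₗ S.d - S.d)) (h := 0)
      (fun j x => ?_) x
    simp only [LinearMap.comp_apply, LinearMap.zero_apply, hmk, LinearMap.sub_apply]
    have : S.d (h1 (S.d (S.p j x))) - S.d (S.p j x)
        = S.p (j + 1) (S.d (h (S.d (S.p j x))) - S.d (S.p j x)) := by
      rw [map_sub, ← S.dp j (h _)]
      congr 1
      · rw [S.dp, e0, add_sub_cancel_right, ← S.dp]
      · rw [S.dp, S.pp]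
    rw [this]
    exact map_mem m _ (hh _)
  refine ⟨h1 - h1 ∘ₗ h1 ∘ₗ S.d, fun j x => ?_, fun j hj x => ?_⟩
  · simp [e1, S.dp]
  · set v := S.p j x with hv
    have hpv : S.p j v = v := S.pp j x
    set u := v - h1 (S.d v) with hu
    have hpu : S.p j u = u := by
      rw [hu, map_sub, hpv]
      have := e1 (j + 1) (S.d v)
      rw [add_sub_cancel_right] at this
      rw [← this, ← S.dp, hpv]
    have hdu : S.d u ∈ m • (⊤ : Submodule R X) := by
      have := neg_mem (e2 v)
      simpa [hu] using this
    have hur : u ∈ LinearMap.range S.d ⊔ m • (⊤ : Submodule R X) := by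
      by_contra hc; exact hj ⟨u, hpu, hdu, hc⟩
    obtain ⟨_, ⟨y, rfl⟩, n, hn, hyn⟩ := Submodule.mem_sup.1 hur
    have h5 := e2 y
    have h6 := map_mem m (S.d ∘ₗ h1) hn
    have h7 := sub_mem (add_mem h5 h6) hn
    convert h7 using 1
    have : S.d (h1 u) = S.d (h1 (S.d y)) + S.d (h1 n) := by rw [← hyn]; simp
    have h8 : S.d y = u - n := by rw [← hyn]; abel
    have h9 : S.d (h1 (S.d y)) = S.d (h1 u) - S.d (h1 n) := by rw [this]; abel
    rw [LinearMap.comp_apply, h9, h8, hu]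
    simp [S.dd]
    abel

lemma f_Delta (h : X →ₗ[R] X) (hh : ∀ j x, h (S.p j x) = S.p (j - 1) (h x)) :
    S.f ((S.d ∘ₗ h + h ∘ₗ S.d).rTensor Y S.z) = 0 := by
  have : ∀ t, (S.d ∘ₗ h + h ∘ₗ S.d).rTensor Y t
      = S.D (h.rTensor Y t) + h.rTensor Y (S.D t) := by
    intro t
    induction t with
    | zero => simp
    | add x y hx hy => simp only [map_add, hx, hy]; abel
    | tmul x y => simp [S.eh h hh, TensorProduct.add_tmul, TensorProduct.neg_tmul]; abel
  rw [this, D_z, map_zero, add_zero, f_D]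

lemma supp_nonempty [Module.Projective R X] (m : Ideal R) [hm : m.IsMaximal] :
    ∃ i, S.Supp m i := by
  by_contra! hS
  obtain ⟨h, hh, hΔ⟩ := S.exists_h m
  have h1 : ∀ x, (S.d ∘ₗ h + h ∘ₗ S.d - LinearMap.id : X →ₗ[R] X) x ∈ m • (⊤ : Submodule R X) := by
    intro x
    rw [← S.psum x, map_sum]
    exact sum_mem fun j _ => hΔ j (hS j) x
  have h2 : ∀ t, S.f ((S.d ∘ₗ h + h ∘ₗ S.d - LinearMap.id : X →ₗ[R] X).rTensor Y t) ∈ m := by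
    intro t
    induction t with
    | zero => simp
    | add x y hx hy => simp only [map_add]; exact add_mem hx hy
    | tmul x y =>
      rw [LinearMap.rTensor_tmul]
      exact map_mem' m (S.f ∘ₗ (TensorProduct.mk R X Y).flip y) (h1 x)
  have h3 := h2 S.z
  rw [LinearMap.rTensor_sub, LinearMap.sub_apply, map_sub, S.f_Delta h hh, LinearMap.rTensor_id,
    LinearMap.id_apply, S.fz, zero_sub, neg_mem_iff] at h3
  exact hm.ne_top ((Ideal.eq_top_iff_one m).2 h3)

open Polynomial in
lemma exists_h' [Module.Finite R X] [Module.Projective R X] (m : Ideal R) [hm : m.IsMaximal]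
    (i : ℤ) (hi : S.Supp m i) :
    ∃ (r : R) (h : X →ₗ[R] X), r ∉ m ∧ ∀ j, j ≠ i → ∀ x,
      S.d (h (S.p j x)) + h (S.d (S.p j x)) = r • S.p j x := by
  obtain ⟨h, hh, hΔ⟩ := S.exists_h m
  let T : X →ₗ[R] X := LinearMap.id - (S.d ∘ₗ h + h ∘ₗ S.d)
  have Tp : ∀ j x, T (S.p j x) = S.p j (T x) := by
    intro j x
    simp only [T, LinearMap.sub_apply, LinearMap.id_apply, LinearMap.add_apply,
      LinearMap.comp_apply, hh, S.dp, map_sub, map_add, sub_add_cancel, add_sub_cancel_right]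
  have Td : ∀ x, T (S.d x) = S.d (T x) := by
    intro x; simp [T, S.dd]
  let g : X →ₗ[R] X := T ∘ₗ (LinearMap.id - S.p i)
  have gp : ∀ j, j ≠ i → ∀ x, g (S.p j x) = T (S.p j x) := by
    intro j hj x; simp [g, S.pp' i j hj.symm]
  have hg : ∀ x, g x ∈ m • (⊤ : Submodule R X) := by
    intro x
    rw [← S.psum x, map_sum]
    refine sum_mem fun j _ => ?_
    by_cases hj : j = i
    · subst hj; simp [g, S.pp]
    · rw [gp j hj]
      have := neg_mem (hΔ j (fun hj' => hj (S.supp_unique m hj' hi)) x)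
      simpa [T] using this
  obtain ⟨P, q, r, hr, hP0, hP⟩ := cayley m g hg
  have hpoly : ∀ (Q : R[X]) j, j ≠ i → ∀ x, aeval g Q (S.p j x) = aeval T Q (S.p j x)
      ∧ aeval T Q (S.p j x) = S.p j (aeval T Q (S.p j x)) := by
    intro Q j hj x
    induction Q using Polynomial.induction_on' with
    | add A B hA hB => simp only [map_add, LinearMap.add_apply, hA.1, hB.1, true_and, ← hA.2, ← hB.2]
    | monomial n c =>
      simp only [aeval_monomial, Module.End.mul_apply, Module.algebraMap_end_apply, map_smul]
      have : (g ^ n) (S.p j x) = (T ^ n) (S.p j x) ∧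
          (T ^ n) (S.p j x) = S.p j ((T ^ n) (S.p j x)) := by
        induction n with
        | zero => simp [S.pp]
        | succ n ih =>
          rw [pow_succ', pow_succ', Module.End.mul_apply, Module.End.mul_apply, ih.1]
          constructor
          · rw [ih.2, gp j hj]
          · rw [← Tp, ← ih.2]
      rw [this.1, ← this.2]; simp
  have hd : ∀ (Q : R[X]) x, aeval T Q (S.d x) = S.d (aeval T Q x) := by
    intro Q x
    induction Q using Polynomial.induction_on' with
    | add A B hA hB => simp only [map_add, LinearMap.add_apply, hA, hB]
    | monomial n c =>
      simp only [aeval_monomial, Module.End.mul_apply, Module.algebraMap_end_apply, map_smul]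
      congr 1
      induction n with
      | zero => simp
      | succ n ih => rw [pow_succ', Module.End.mul_apply, Module.End.mul_apply, ih, Td]
  refine ⟨r, h ∘ₗ aeval T q, hr, fun j hj x => ?_⟩
  have h1 : aeval T P (S.p j x) = 0 := by rw [← (hpoly P j hj x).1, hP0]; rfl
  rw [hP] at h1
  simp only [map_add, map_mul, map_sub, aeval_X, aeval_C, LinearMap.add_apply,
    Module.End.mul_apply, Module.algebraMap_end_apply, LinearMap.sub_apply, one_smul] at h1
  simp only [LinearMap.comp_apply, hd]
  simp only [T, LinearMap.sub_apply, LinearMap.id_apply, LinearMap.add_apply,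
      LinearMap.comp_apply] at h1 ⊢
  rw [sub_sub_cancel_left] at h1
  exact (neg_add_eq_zero.1 h1)

lemma main [Module.Finite R X] [Module.Projective R X] (m : Ideal R) [hm : m.IsMaximal] :
    ∃ (ρ : R) (v : X) (ν : X →ₗ[R] R), ρ ∉ m ∧ S.d v = 0 ∧ (∀ x, ν (S.d x) = 0) ∧ ν v ∉ m ∧
      ∀ a, S.d a = 0 → ∃ y, ρ • a = ν a • v + S.d y := by
  obtain ⟨i, hi⟩ := S.supp_nonempty m
  obtain ⟨r, h, hr, hh⟩ := S.exists_h' m i hi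
  obtain ⟨a, l, ha, hda, hlp, hld, hla⟩ := S.supp_functional m hi
  set c := r • a - h (S.d a) with hc
  have hdc : S.d c = 0 := by
    have := hh (i + 1) (by omega) (S.d a)
    rw [← S.dp, ha, S.dd, map_zero, add_zero] at this
    rw [hc, map_sub, map_smul, this, sub_self]
  let μ : X →ₗ[R] R := r • l - l ∘ₗ S.d ∘ₗ h ∘ₗ S.p i
  have hμd : ∀ x, μ (S.d x) = 0 := by
    intro x
    have h1 := hh (i - 1) (by omega) x
    have h2 := congrArg S.d h1
    rw [map_add, S.dd, zero_add, map_smul] at h2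
    have h3 : S.d (S.p (i - 1) x) = S.p i (S.d x) := by rw [S.dp, sub_add_cancel]
    simp only [μ, LinearMap.sub_apply, LinearMap.smul_apply, LinearMap.comp_apply, smul_eq_mul]
    rw [← h3, h2, map_smul, h3, hlp, smul_eq_mul, sub_self]
  have hμc : μ c ∉ m := by
    intro h'
    have h1 : r * (r * l a) ∈ m := by
      have h2 := add_mem h' (hld (h (S.p i c)))
      have h3 := add_mem h2 (m.mul_mem_left r (map_mem' m (l ∘ₗ h) hda))
      simp only [μ, hc, LinearMap.sub_apply, LinearMap.smul_apply, LinearMap.comp_apply,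
        smul_eq_mul, map_sub, map_smul] at h3
      convert h3 using 1
      ring
    rcases hm.isPrime.mem_or_mem h1 with h | h
    · exact hr h
    · rcases hm.isPrime.mem_or_mem h with h | h
      · exact hr h
      · exact hla h
  have hdc' : S.d c ∈ m • (⊤ : Submodule R X) := by rw [hdc]; exact zero_mem _
  have hμd' : ∀ x, μ (S.d x) ∈ m := fun x => by rw [hμd]; exact zero_mem _
  set c1 := S.e (S.psi c) with hc1
  have hdc1 : S.d c1 = 0 := by rw [hc1, d_epsi, hdc]; simp
  have hdc1' : S.d c1 ∈ m • (⊤ : Submodule R X) := by rw [hdc1]; exact zero_mem _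
  have hμ1d : ∀ x, (μ ∘ₗ S.e) (S.d x) = 0 := fun x => by
    rw [LinearMap.comp_apply, S.ed, map_neg, hμd, neg_zero]
  have hμc1 : μ c1 ∉ m := by
    intro h'
    have := add_mem (S.cross m μ μ hμd' hμd' c c hdc' hdc') (m.mul_mem_left (μ c) h')
    rw [sub_add_cancel] at this
    rcases hm.isPrime.mem_or_mem this with h | h
    · exact hμc h
    · exact hμc h
  refine ⟨(μ ∘ₗ S.e) (S.psi c1), S.e (S.psi c1), (μ ∘ₗ S.e) ∘ₗ S.psi, ?_, ?_, ?_, ?_, ?_⟩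
  · intro h'
    have := add_mem (S.cong m μ hμd' c hdc') h'
    rw [LinearMap.comp_apply, sub_add_cancel] at this
    exact hμc this
  · rw [d_epsi, hdc1]; simp
  · intro x
    rw [LinearMap.comp_apply, ← d_psi, hμ1d]
  · intro h'
    have := add_mem (S.cong m μ hμd' c1 hdc1') h'
    simp only [LinearMap.comp_apply, sub_add_cancel] at this
    exact hμc1 this
  · intro a ha
    obtain ⟨y, hy⟩ := S.star ⊥ a c1 (μ ∘ₗ S.e) (by simp [ha]) (by simp [hdc1])
      (fun x => by rw [hμ1d]; exact zero_mem _)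
    refine ⟨y, ?_⟩
    rw [Submodule.bot_smul, Submodule.mem_bot, sub_sub, sub_eq_zero] at hy
    exact hy

end Data
end Fausk

namespace Fausk

section Mod
variable {R M : Type} [CommRing R] [AddCommGroup M] [Module R M]

/-- locally (at maximal ideals) rank one -/
def LocInv (R M : Type) [CommRing R] [AddCommGroup M] [Module R M] : Prop :=
  ∀ m : Ideal R, m.IsMaximal → ∃ (ρ : R) (v : M) (ν : M →ₗ[R] R), ρ ∉ m ∧ ν v ∉ m ∧
    ∀ a, ρ • a = ν a • v

lemma LocInv.invertible (h : LocInv R M) : Module.Invertible R M := by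
  constructor
  constructor
  · refine (injective_iff_map_eq_zero _).2 ?_
    intro t ht
    by_contra hne
    have : LinearMap.ker (LinearMap.toSpanSingleton R _ t) ≠ ⊤ := by
      intro h1
      have : (1 : R) ∈ LinearMap.ker (LinearMap.toSpanSingleton R _ t) := h1 ▸ trivial
      simp at this
      exact hne this
    obtain ⟨m, hm, hle⟩ := Ideal.exists_le_maximal _ this
    obtain ⟨ρ, v, ν, hρ, -, hv⟩ := h m hm
    have key : ∀ t : Module.Dual R M ⊗[R] M,
        (ρ * ρ) • t = (ρ * contractLeft R M t) • (ν ⊗ₜ[R] v) := by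
      intro t
      induction t with
      | zero => simp
      | add x y hx hy => rw [smul_add, hx, hy, map_add, mul_add, add_smul]
      | tmul φ a =>
        have h1 : ∀ b, ρ * φ b = ν b * φ v := by
          intro b
          have := congrArg φ (hv b)
          simpa using this
        have h2 : ρ • φ = φ v • ν := by
          ext b; simp [h1, mul_comm]
        rw [contractLeft_apply, mul_smul, ← TensorProduct.tmul_smul, TensorProduct.smul_tmul', h2, hv,
          h1, TensorProduct.smul_tmul_smul, mul_comm]
    have h3 := key t
    rw [ht, mul_zero, zero_smul] at h3
    have h4 : ρ * ρ ∈ m := hle (by simpa using h3)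
    rcases hm.isPrime.mem_or_mem h4 with h | h <;> exact hρ h
  · rw [← LinearMap.range_eq_top]
    by_contra hne
    obtain ⟨m, hm, hle⟩ := Ideal.exists_le_maximal _ hne
    obtain ⟨ρ, v, ν, -, hν, -⟩ := h m hm
    exact hν (hle ⟨ν ⊗ₜ v, by simp⟩)

lemma idem_connected [ConnectedSpace (PrimeSpectrum R)] (e : R) (he : IsIdempotentElem e) :
    e = 0 ∨ e = 1 := by
  have h1 : IsClopen (PrimeSpectrum.basicOpen e : Set (PrimeSpectrum R)) :=
    PrimeSpectrum.isClopen_iff.2 ⟨e, he, rfl⟩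
  rcases isClopen_iff.1 h1 with h | h
  · left
    have : PrimeSpectrum.basicOpen e = ⊥ := TopologicalSpace.Opens.ext h
    rw [PrimeSpectrum.basicOpen_eq_bot_iff] at this
    obtain ⟨n, hn⟩ := this
    cases n with
    | zero =>
      rw [pow_zero] at hn
      rw [← mul_one e, hn, mul_zero]
    | succ n => rwa [he.pow_succ_eq] at hn
  · right
    have hu : IsUnit e := by
      by_contra hu
      obtain ⟨m, hm, hem⟩ := exists_max_ideal_of_mem_nonunits hu
      have : (⟨m, hm.isPrime⟩ : PrimeSpectrum R) ∈
        (PrimeSpectrum.basicOpen e : Set (PrimeSpectrum R)) := h ▸ trivial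
      exact this hem
    obtain ⟨u, rfl⟩ := hu
    exact u.isUnit.mul_left_cancel (by rw [mul_one]; exact he)

lemma conclude (H : ℤ → Type) [∀ i, AddCommGroup (H i)] [∀ i, Module R (H i)]
    (h : LocInv R (DirectSum ℤ H)) :
    (∃ (N : Type) (_ : AddCommGroup N) (_ : Module R N),
        Nonempty (((DirectSum ℤ H) ⊗[R] N) ≃ₗ[R] R)) ∧
    (∀ i, Module.Finite R (H i) ∧ Module.Projective R (H i)) ∧
    (ConnectedSpace (PrimeSpectrum R) →
      ∃ b : ℤ, ¬ Subsingleton (H b) ∧ ∀ i, i ≠ b → Subsingleton (H i)) := by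
  have := h.invertible
  have hc : ∀ i, DirectSum.component R ℤ H i ∘ₗ DirectSum.lof R ℤ H i = LinearMap.id := by
    intro i; ext x; simp [DirectSum.component.lof_self]
  refine ⟨⟨Module.Dual R (DirectSum ℤ H), inferInstance, inferInstance,
    ⟨TensorProduct.comm R _ _ ≪≫ₗ Module.Invertible.linearEquiv R _⟩⟩, fun i => ⟨?_, ?_⟩, ?_⟩
  · exact Module.Finite.of_surjective (DirectSum.component R ℤ H i)
      (fun x => ⟨DirectSum.lof R ℤ H i x, LinearMap.congr_fun (hc i) x⟩)
  · exact Module.Projective.of_split _ _ (hc i)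
  · intro hconn
    have hex : ∀ i, ∃ r : R, ∀ x, r • x =
        DirectSum.lof R ℤ H i (DirectSum.component R ℤ H i x) := by
      intro i
      obtain ⟨r, hr⟩ := (Module.Invertible.toModuleEnd_bijective (R := R) (M := DirectSum ℤ H)).2
        (DirectSum.lof R ℤ H i ∘ₗ DirectSum.component R ℤ H i)
      exact ⟨r, fun x => LinearMap.congr_fun hr x⟩
    choose r hr using hex
    have hfaith : ∀ s : R, (∀ x : DirectSum ℤ H, s • x = 0) → s = 0 := fun s hs =>
      FaithfulSMul.eq_of_smul_eq_smul (α := DirectSum ℤ H) (fun x => by rw [hs, zero_smul])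
    have hid : ∀ i, r i = 0 ∨ r i = 1 := by
      intro i
      apply idem_connected
      apply FaithfulSMul.eq_of_smul_eq_smul (α := DirectSum ℤ H)
      intro x
      rw [mul_smul, hr, hr, DirectSum.component.lof_self]
    have h0 : ∀ i, r i = 0 → Subsingleton (H i) := by
      intro i hi
      refine ⟨fun x y => ?_⟩
      have : ∀ x : H i, x = 0 := by
        intro x
        have := congrArg (DirectSum.component R ℤ H i) (hr i (DirectSum.lof R ℤ H i x))
        rw [DirectSum.component.lof_self, DirectSum.component.lof_self, hi] at this
        simpa using this.symm
      rw [this x, this y]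
    have hnt : Nontrivial R := by
      rw [← PrimeSpectrum.nonempty_iff_nontrivial]; exact hconn.toNonempty
    have hb : ∃ b, r b = 1 := by
      by_contra! hb
      have hs : ∀ i, Subsingleton (H i) := fun i => h0 i ((hid i).resolve_right (hb i))
      apply one_ne_zero (α := R)
      apply hfaith
      intro x
      ext i
      exact Subsingleton.elim _ _
    obtain ⟨b, hb⟩ := hb
    have hi : ∀ i, i ≠ b → Subsingleton (H i) := by
      intro i hi
      refine h0 i ((hid i).resolve_right fun h1 => ?_)
      have : ∀ x : DirectSum ℤ H, x = 0 := by
        intro x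
        have h2 := hr i x
        have h3 := hr b x
        rw [h1, one_smul] at h2
        rw [hb, one_smul] at h3
        rw [h2, h3, DirectSum.component.of]
        simp [hi.symm]
      exact one_ne_zero (α := R) (hfaith 1 fun x => this _)
    refine ⟨b, fun hbs => ?_, hi⟩
    apply one_ne_zero (α := R)
    apply hfaith
    intro x
    ext i
    by_cases h : i = b
    · subst h; exact Subsingleton.elim _ _
    · have := hi i h; exact Subsingleton.elim _ _

/-- passage from cycles to homology -/
lemma Data.locInv {X Y C : Type} [AddCommGroup X] [Module R X] [AddCommGroup Y] [Module R Y]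
    [AddCommGroup C] [Module R C] [Module.Finite R X] [Module.Projective R X]
    (S : Data R X Y) (j : C →ₗ[R] X) (q : C →ₗ[R] M) (hq : Function.Surjective q)
    (hj : ∀ x, S.d x = 0 ↔ ∃ c, j c = x) (hjq : ∀ c, q c = 0 ↔ ∃ x, S.d x = j c) :
    LocInv R M := by
  intro m hm
  obtain ⟨ρ, v, ν, hρ, hv, hν, hνv, H⟩ := S.main m
  obtain ⟨c, rfl⟩ := (hj v).1 hv
  have hker : LinearMap.ker q ≤ LinearMap.ker (ν ∘ₗ j) := by
    intro c hc
    obtain ⟨x, hx⟩ := (hjq c).1 hc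
    simp [← hx, hν]
  let ν' : M →ₗ[R] R := (LinearMap.ker q).liftQ (ν ∘ₗ j) hker ∘ₗ
    (q.quotKerEquivOfSurjective hq).symm.toLinearMap
  have hν' : ∀ c, ν' (q c) = ν (j c) := by
    intro c
    have : (q.quotKerEquivOfSurjective hq).symm (q c) = (LinearMap.ker q).mkQ c := by
      rw [LinearEquiv.symm_apply_eq]; rfl
    simp [ν', this]
  refine ⟨ρ, q c, ν', hρ, by rwa [hν'], fun a => ?_⟩
  obtain ⟨a, rfl⟩ := hq a
  obtain ⟨y, hy⟩ := H (j a) ((hj _).2 ⟨a, rfl⟩)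
  rw [hν', ← sub_eq_zero, ← map_smul, ← map_smul, ← map_sub, hjq]
  refine ⟨y, ?_⟩
  rw [map_sub, map_smul, map_smul, hy]; abel

end Mod
end Fausk

namespace Fausk

section Graded
variable {R : Type} [CommRing R]

/-- sign -/
def sg (R : Type) [CommRing R] (i : ℤ) : R := (((i.negOnePow : ℤˣ) : ℤ) : R)

lemma sg_succ (i : ℤ) : sg R (i + 1) = - sg R i := by
  simp [sg, Int.negOnePow_succ]

lemma sg_sq (i : ℤ) : sg R i * sg R i = 1 := by
  rw [sg, ← Int.cast_mul, ← Units.val_mul, Int.units_mul_self]; simp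

lemma sg_mul (i j : ℤ) (h : i + j = 0) : sg R i * sg R j = 1 := by
  rw [sg, sg, ← Int.cast_mul, ← Units.val_mul, ← Int.negOnePow_add, h]; simp

variable (A : ℤ → Type) [∀ i, AddCommGroup (A i)] [∀ i, Module R (A i)]

/-- total differential of a graded module -/
noncomputable def gd (dx : ∀ i j, A i →ₗ[R] A j) : DirectSum ℤ A →ₗ[R] DirectSum ℤ A :=
  DirectSum.toModule R ℤ _ fun i => DirectSum.lof R ℤ A (i + 1) ∘ₗ dx i (i + 1)

/-- sign operator -/
noncomputable def ge : DirectSum ℤ A →ₗ[R] DirectSum ℤ A :=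
  DirectSum.toModule R ℤ _ fun i => sg R i • DirectSum.lof R ℤ A i

/-- projection -/
noncomputable def gp (i : ℤ) : DirectSum ℤ A →ₗ[R] DirectSum ℤ A :=
  DirectSum.lof R ℤ A i ∘ₗ DirectSum.component R ℤ A i

@[simp] lemma gd_lof (dx : ∀ i j, A i →ₗ[R] A j) (i : ℤ) (a : A i) :
    gd A dx (DirectSum.lof R ℤ A i a) = DirectSum.lof R ℤ A (i + 1) (dx i (i + 1) a) := by
  simp [gd]

@[simp] lemma ge_lof (i : ℤ) (a : A i) :
    ge (R := R) A (DirectSum.lof R ℤ A i a) = sg R i • DirectSum.lof R ℤ A i a := by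
  simp [ge]

lemma gp_lof_self (i : ℤ) (a : A i) :
    gp (R := R) A i (DirectSum.lof R ℤ A i a) = DirectSum.lof R ℤ A i a := by
  simp [gp, DirectSum.component.lof_self]

lemma gp_lof_ne {i j : ℤ} (h : j ≠ i) (a : A i) :
    gp (R := R) A j (DirectSum.lof R ℤ A i a) = 0 := by
  simp [gp, DirectSum.component.of, h.symm]

variable {A}

lemma gext {B : Type} [AddCommGroup B] [Module R B] {g h : DirectSum ℤ A →ₗ[R] B}
    (H : ∀ i a, g (DirectSum.lof R ℤ A i a) = h (DirectSum.lof R ℤ A i a)) (x) : g x = h x := by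
  have : g = h := DirectSum.linearMap_ext R fun i => LinearMap.ext fun a => H i a
  rw [this]

variable {C : ℤ → Type} [∀ i, AddCommGroup (C i)] [∀ i, Module R (C i)]

lemma text {B : Type} [AddCommGroup B] [Module R B]
    {g h : (DirectSum ℤ A) ⊗[R] (DirectSum ℤ C) →ₗ[R] B}
    (H : ∀ i a j c, g (DirectSum.lof R ℤ A i a ⊗ₜ DirectSum.lof R ℤ C j c)
      = h (DirectSum.lof R ℤ A i a ⊗ₜ DirectSum.lof R ℤ C j c)) (x) : g x = h x := by
  have : g = h := by
    refine TensorProduct.ext' fun x y => ?_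
    refine gext (g := g ∘ₗ (TensorProduct.mk R _ _).flip y)
      (h := h ∘ₗ (TensorProduct.mk R _ _).flip y) (fun i a => ?_) x
    exact gext (g := g ∘ₗ (TensorProduct.mk R _ _ (DirectSum.lof R ℤ A i a)))
      (h := h ∘ₗ (TensorProduct.mk R _ _ (DirectSum.lof R ℤ A i a))) (fun j c => H i a j c) y
  rw [this]

/-- abstract data of the tensor product complex -/
structure TData (R : Type) [CommRing R] (A C : ℤ → Type)
    [∀ i, AddCommGroup (A i)] [∀ i, Module R (A i)]
    [∀ i, AddCommGroup (C i)] [∀ i, Module R (C i)]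
    (dx : ∀ i j, A i →ₗ[R] A j) (dy : ∀ i j, C i →ₗ[R] C j)
    (T : ℤ → Type) [∀ i, AddCommGroup (T i)] [∀ i, Module R (T i)] where
  dxx : ∀ i a, dx (i + 1) (i + 1 + 1) (dx i (i + 1) a) = 0
  dyy : ∀ i a, dy (i + 1) (i + 1 + 1) (dy i (i + 1) a) = 0
  δ : ∀ i j, T i →ₗ[R] T j
  ι : ∀ i j n, i + j = n → A i ⊗[R] C j →ₗ[R] T n
  desc : ∀ (n : ℤ) (B : Type) [AddCommGroup B] [Module R B]
    (g : ∀ i j, i + j = n → A i ⊗[R] C j →ₗ[R] B), ∃ L : T n →ₗ[R] B,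
      ∀ i j h t, L (ι i j n h t) = g i j h t
  hom_ext : ∀ (n : ℤ) (B : Type) [AddCommGroup B] [Module R B] (g h : T n →ₗ[R] B),
    (∀ i j hij a c, g (ι i j n hij (a ⊗ₜ c)) = h (ι i j n hij (a ⊗ₜ c))) → ∀ t, g t = h t
  δι : ∀ (i j n n' : ℤ) (h : i + j = n) (hn : n + 1 = n') a c, δ n n' (ι i j n h (a ⊗ₜ c)) =
    ι (i + 1) j n' (by omega) (dx i (i + 1) a ⊗ₜ c) +
      sg R i • ι i (j + 1) n' (by omega) (a ⊗ₜ dy j (j + 1) c)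
  F : T 0 →ₗ[R] R
  Fδ : ∀ t, F (δ (-1) 0 t) = 0
  z0 : T 0
  δz0 : δ 0 1 z0 = 0
  Fz0 : F z0 = 1
  ex : ∀ n, n ≠ 0 → ∀ t : T n, δ n (n + 1) t = 0 → ∃ u, δ (n - 1) n u = t
  ex0 : ∀ t : T 0, δ 0 1 t = 0 → F t = 0 → ∃ u, δ (-1) 0 u = t

namespace TData
variable {dx : ∀ i j, A i →ₗ[R] A j} {dy : ∀ i j, C i →ₗ[R] C j}
    {T : ℤ → Type} [∀ i, AddCommGroup (T i)] [∀ i, Module R (T i)]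
    (S : TData R A C dx dy T)

/-- comparison map -/
noncomputable def Φ (n : ℤ) : T n →ₗ[R] (DirectSum ℤ A) ⊗[R] (DirectSum ℤ C) :=
  (S.desc n _ (fun i j _ => TensorProduct.map (DirectSum.lof R ℤ A i)
    (DirectSum.lof R ℤ C j))).choose

@[simp] lemma Φ_ι (n i j : ℤ) (h : i + j = n) (a : A i) (c : C j) :
    S.Φ n (S.ι i j n h (a ⊗ₜ c)) = DirectSum.lof R ℤ A i a ⊗ₜ DirectSum.lof R ℤ C j c :=
  (S.desc n _ (fun i j _ => TensorProduct.map (DirectSum.lof R ℤ A i)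
    (DirectSum.lof R ℤ C j))).choose_spec i j h (a ⊗ₜ c)

/-- comparison map -/
noncomputable def Ψ (n : ℤ) : (DirectSum ℤ A) ⊗[R] (DirectSum ℤ C) →ₗ[R] T n :=
  DirectSum.toModule R (ℤ × ℤ) (T n)
    (fun ij => if h : ij.1 + ij.2 = n then S.ι ij.1 ij.2 n h else 0) ∘ₗ
    (TensorProduct.directSum R R A C).toLinearMap

lemma Ψ_lof (n i j : ℤ) (h : i + j = n) (a : A i) (c : C j) :
    S.Ψ n (DirectSum.lof R ℤ A i a ⊗ₜ DirectSum.lof R ℤ C j c) = S.ι i j n h (a ⊗ₜ c) := by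
  simp [Ψ, h]

lemma Ψ_lof_ne (n i j : ℤ) (h : i + j ≠ n) (a : A i) (c : C j) :
    S.Ψ n (DirectSum.lof R ℤ A i a ⊗ₜ DirectSum.lof R ℤ C j c) = 0 := by
  simp [Ψ, h]

lemma ΨΦ (n : ℤ) (t : T n) : S.Ψ n (S.Φ n t) = t := by
  refine S.hom_ext n _ (S.Ψ n ∘ₗ S.Φ n) LinearMap.id (fun i j hij a c => ?_) t
  simp [Ψ_lof, hij]

lemma DΦ (n n' : ℤ) (h : n + 1 = n') (t : T n) :
    tD (gd A dx) (ge (R := R) A) (gd C dy) (S.Φ n t) = S.Φ n' (S.δ n n' t) := by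
  refine S.hom_ext n _ (tD (gd A dx) (ge (R := R) A) (gd C dy) ∘ₗ S.Φ n) (S.Φ n' ∘ₗ S.δ n n')
    (fun i j hij a c => ?_) t
  simp [S.δι i j n n' hij h, TensorProduct.smul_tmul']

lemma ΨD (n n' : ℤ) (h : n + 1 = n') (t) :
    S.Ψ n' (tD (gd A dx) (ge (R := R) A) (gd C dy) t) = S.δ n n' (S.Ψ n t) := by
  refine text (g := S.Ψ n' ∘ₗ tD (gd A dx) (ge (R := R) A) (gd C dy)) (h := S.δ n n' ∘ₗ S.Ψ n)
    (fun i a j c => ?_) t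
  simp only [LinearMap.comp_apply, tD_tmul, gd_lof, ge_lof, map_add, ← TensorProduct.smul_tmul',
    map_smul]
  by_cases hij : i + j = n
  · rw [S.Ψ_lof n' (i + 1) j (by omega), S.Ψ_lof n' i (j + 1) (by omega), S.Ψ_lof n i j hij,
      S.δι i j n n' hij h]
  · rw [S.Ψ_lof_ne n' (i + 1) j (by omega), S.Ψ_lof_ne n' i (j + 1) (by omega),
      S.Ψ_lof_ne n i j hij]; simp

lemma decomp (w : (DirectSum ℤ A) ⊗[R] (DirectSum ℤ C)) :
    ∃ s : Finset ℤ, ∀ s', s ⊆ s' → w = ∑ n ∈ s', S.Φ n (S.Ψ n w) := by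
  have hadd : ∀ x y : (DirectSum ℤ A) ⊗[R] (DirectSum ℤ C),
      (∃ s : Finset ℤ, ∀ s', s ⊆ s' → x = ∑ n ∈ s', S.Φ n (S.Ψ n x)) →
      (∃ s : Finset ℤ, ∀ s', s ⊆ s' → y = ∑ n ∈ s', S.Φ n (S.Ψ n y)) →
      (∃ s : Finset ℤ, ∀ s', s ⊆ s' → x + y = ∑ n ∈ s', S.Φ n (S.Ψ n (x + y))) := by
    rintro x y ⟨s, hs⟩ ⟨t, ht⟩
    refine ⟨s ∪ t, fun s' h => ?_⟩
    simp only [map_add, Finset.sum_add_distrib]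
    rw [← hs s' (Finset.union_subset_left h), ← ht s' (Finset.union_subset_right h)]
  induction w with
  | zero => exact ⟨∅, fun _ _ => by simp⟩
  | add x y hx hy => exact hadd x y hx hy
  | tmul x y =>
    induction x using DirectSum.induction_on with
    | zero => exact ⟨∅, fun _ _ => by simp⟩
    | add x x' hx hx' => rw [TensorProduct.add_tmul]; exact hadd _ _ hx hx'
    | of i a =>
      induction y using DirectSum.induction_on with
      | zero => exact ⟨∅, fun _ _ => by simp⟩
      | add x x' hx hx' => rw [TensorProduct.tmul_add]; exact hadd _ _ hx hx'
      | of j c =>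
        refine ⟨{i + j}, fun s' h => ?_⟩
        rw [Finset.singleton_subset_iff] at h
        rw [← DirectSum.lof_eq_of R, ← DirectSum.lof_eq_of R, Finset.sum_eq_single_of_mem _ h,
          S.Ψ_lof _ i j rfl, S.Φ_ι]
        intro n _ hn
        rw [S.Ψ_lof_ne _ i j hn.symm, map_zero]

lemma ge_gd (A : ℤ → Type) [∀ i, AddCommGroup (A i)] [∀ i, Module R (A i)]
    (dx : ∀ i j, A i →ₗ[R] A j) (y) : ge (R := R) A (gd A dx y) = - gd A dx (ge (R := R) A y) := by
  refine gext (g := ge (R := R) A ∘ₗ gd A dx) (h := - gd A dx ∘ₗ ge (R := R) A) (fun i a => ?_) y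
  simp [sg_succ]

lemma ge_ge (A : ℤ → Type) [∀ i, AddCommGroup (A i)] [∀ i, Module R (A i)] (y) :
    ge (R := R) A (ge (R := R) A y) = y := by
  refine gext (g := ge (R := R) A ∘ₗ ge (R := R) A) (h := LinearMap.id) (fun i a => ?_) y
  simp [smul_smul, sg_sq]

lemma gd_gd (A : ℤ → Type) [∀ i, AddCommGroup (A i)] [∀ i, Module R (A i)]
    (dx : ∀ i j, A i →ₗ[R] A j) (h : ∀ i a, dx (i + 1) (i + 1 + 1) (dx i (i + 1) a) = 0) (y) :
    gd A dx (gd A dx y) = 0 := by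
  refine gext (g := gd A dx ∘ₗ gd A dx) (h := 0) (fun i a => ?_) y
  simp [h]

/-- the main construction -/
noncomputable def toData (a b : ℤ) (hA : ∀ i, (i < a ∨ b < i) → Subsingleton (A i)) :
    Data R (DirectSum ℤ A) (DirectSum ℤ C) where
  d := gd A dx
  e := ge (R := R) A
  p := gp (R := R) A
  sgn := sg R
  a := a
  b := b
  dY := gd C dy
  eY := ge (R := R) C
  z := S.Φ 0 S.z0
  f := S.F ∘ₗ S.Ψ 0
  dd := gd_gd A dx S.dxx
  pp i x := by simp [gp, DirectSum.component.lof_self]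
  pp' i j h x := by
    simp only [gp, LinearMap.comp_apply]
    rw [DirectSum.component.of]
    simp [h.symm]
  psum x := by
    have : ∀ x, (∑ i ∈ Finset.Icc a b, gp (R := R) A i : _ →ₗ[R] _) x = LinearMap.id (R := R) x := by
      refine gext (fun i y => ?_)
      rw [LinearMap.sum_apply, LinearMap.id_apply]
      by_cases hi : i ∈ Finset.Icc a b
      · rw [Finset.sum_eq_single_of_mem i hi, gp_lof_self]
        intro j _ hj
        exact gp_lof_ne A hj y
      · have := hA i (by simp at hi; omega)
        rw [Subsingleton.elim y 0]; simp
    have h2 := this x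
    simpa using h2
  dp i x := by
    refine gext (g := gd A dx ∘ₗ gp (R := R) A i) (h := gp (R := R) A (i + 1) ∘ₗ gd A dx) (fun j y => ?_) x
    simp only [LinearMap.comp_apply, gd_lof]
    by_cases hij : i = j
    · subst hij; rw [gp_lof_self, gp_lof_self, gd_lof]
    · rw [gp_lof_ne A hij, gp_lof_ne A (by omega), map_zero]
  sgn_succ := sg_succ
  sgn_sq := sg_sq
  ep i x := by simp [gp]
  ddY := gd_gd C dy S.dyy
  eeY := ge_ge C
  edY := ge_gd C dy
  Dz := by rw [S.DΦ 0 1 (by norm_num), S.δz0, map_zero]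
  fD w := by rw [LinearMap.comp_apply, S.ΨD (-1) 0 (by norm_num), S.Fδ]
  fz := by rw [LinearMap.comp_apply, S.ΨΦ, S.Fz0]
  Ez := by
    refine S.hom_ext 0 _ (TensorProduct.map (ge (R := R) A) (ge (R := R) C) ∘ₗ S.Φ 0) (S.Φ 0)
      (fun i j hij a c => ?_) S.z0
    simp only [LinearMap.comp_apply, Φ_ι, TensorProduct.map_tmul, ge_lof,
      TensorProduct.smul_tmul_smul, sg_mul i j hij, one_smul]
  fE w := by
    simp only [LinearMap.comp_apply]
    congr 1
    refine text (g := S.Ψ 0 ∘ₗ TensorProduct.map (ge (R := R) A) (ge (R := R) C)) (h := S.Ψ 0)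
      (fun i a j c => ?_) w
    simp only [LinearMap.comp_apply, TensorProduct.map_tmul, ge_lof,
      TensorProduct.smul_tmul_smul, map_smul]
    by_cases hij : i + j = 0
    · rw [sg_mul i j hij, one_smul]
    · rw [S.Ψ_lof_ne _ i j hij, smul_zero]
  exact w hw := by
    have hc : ∀ n n', n + 1 = n' → S.δ n n' (S.Ψ n w) = 0 := fun n n' h => by
      rw [← S.ΨD n n' h, hw, map_zero]
    have hn : ∀ n, ∃ u, S.Φ n (S.Ψ n w) = (if n = 0 then S.F (S.Ψ 0 w) • S.Φ 0 S.z0 else 0) +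
        tD (gd A dx) (ge (R := R) A) (gd C dy) u := by
      intro n
      by_cases h0 : n = 0
      · subst h0
        obtain ⟨u, hu⟩ := S.ex0 (S.Ψ 0 w - S.F (S.Ψ 0 w) • S.z0)
          (by rw [map_sub, map_smul, S.δz0, hc 0 1 (by norm_num)]; simp)
          (by rw [map_sub, map_smul, S.Fz0]; simp)
        refine ⟨S.Φ (-1) u, ?_⟩
        rw [S.DΦ (-1) 0 (by norm_num), hu]
        simp
      · obtain ⟨u, hu⟩ := S.ex n h0 _ (hc n _ rfl)
        refine ⟨S.Φ (n - 1) u, ?_⟩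
        rw [S.DΦ (n - 1) n (by omega), hu]
        simp [h0]
    choose u hu using hn
    obtain ⟨s, hs⟩ := S.decomp w
    refine ⟨S.F (S.Ψ 0 w), ∑ n ∈ insert 0 s, u n, ?_⟩
    rw [map_sum]
    conv_lhs => rw [hs (insert 0 s) (Finset.subset_insert _ _)]
    simp only [hu]
    rw [Finset.sum_add_distrib]
    simp

end TData
end Graded
end Fausk

namespace Fausk

section Cx
variable {R : Type} [CommRing R] (K : HomologicalComplex (ModuleCat R) (ComplexShape.up ℤ))

lemma cyc_iff (i j : ℤ) (h : i + 1 = j) (t : K.X i) :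
    (K.d i j).hom t = 0 ↔ ∃ c : K.cycles i, (K.iCycles i).hom c = t := by
  have hj : (ComplexShape.up ℤ).next i = j := by
    rw [← h]; exact (ComplexShape.up ℤ).next_eq' rfl
  constructor
  · intro ht
    have hex := ShortComplex.exact_of_f_is_kernel
      (ShortComplex.mk (K.iCycles i) (K.d i j) (by simp)) (K.cyclesIsKernel i j hj)
    exact (ShortComplex.moduleCat_exact_iff _).1 hex t ht
  · rintro ⟨c, rfl⟩
    have := K.iCycles_d i j
    exact congrArg (fun g => g.hom c) this

lemma hom_iff (k i : ℤ) (h : k + 1 = i) (c : K.cycles i) :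
    (K.homologyπ i).hom c = 0 ↔ ∃ u : K.X k, (K.d k i).hom u = (K.iCycles i).hom c := by
  have hj : (ComplexShape.up ℤ).prev i = k := by
    rw [← h]; exact (ComplexShape.up ℤ).prev_eq' rfl
  have hinj : Function.Injective (K.iCycles i).hom :=
    (ModuleCat.mono_iff_injective _).1 inferInstance
  have hti : ∀ u, (K.iCycles i).hom ((K.toCycles k i).hom u) = (K.d k i).hom u := fun u =>
    congrArg (fun g => g.hom u) (K.toCycles_i k i)
  constructor
  · intro ht
    have hex := ShortComplex.exact_of_g_is_cokernel
      (ShortComplex.mk (K.toCycles k i) (K.homologyπ i) (by simp)) (K.homologyIsCokernel k i hj)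
    obtain ⟨u, hu⟩ := (ShortComplex.moduleCat_exact_iff _).1 hex c ht
    refine ⟨u, ?_⟩
    rw [← hti]
    exact congrArg _ hu
  · rintro ⟨u, hu⟩
    rw [← hti] at hu
    rw [← hinj hu]
    exact congrArg (fun g => g.hom u) (K.toCycles_comp_homologyπ k i)

lemma pi_surj (i : ℤ) : Function.Surjective (K.homologyπ i).hom :=
  (ModuleCat.epi_iff_surjective _).1 inferInstance

lemma qi (L : HomologicalComplex (ModuleCat R) (ComplexShape.up ℤ)) (f : K ⟶ L) [QuasiIso f]
    (e : L.X 0 ≅ ModuleCat.of R R) (hLd : ∀ i j, L.d i j = 0) (hLx : ∀ n, n ≠ 0 → L.ExactAt n) :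
    ∃ F : K.X 0 →ₗ[R] R, (∀ t, F ((K.d (-1) 0).hom t) = 0) ∧
      (∃ z, (K.d 0 1).hom z = 0 ∧ F z = 1) ∧
      (∀ n, n ≠ 0 → ∀ t : K.X n, (K.d n (n+1)).hom t = 0 → ∃ u, (K.d (n-1) n).hom u = t) ∧
      (∀ t : K.X 0, (K.d 0 1).hom t = 0 → F t = 0 → ∃ u, (K.d (-1) 0).hom u = t) := by
  have hbij : Function.Bijective (HomologicalComplex.homologyMap f 0).hom :=
    ConcreteCategory.bijective_of_isIso (HomologicalComplex.homologyMap f 0)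
  have hnat : ∀ c, (L.homologyπ 0).hom ((HomologicalComplex.cyclesMap f 0).hom c) =
      (HomologicalComplex.homologyMap f 0).hom ((K.homologyπ 0).hom c) := fun c =>
    congrArg (fun g => g.hom c) (HomologicalComplex.homologyπ_naturality f 0).symm
  have hci : ∀ c, (L.iCycles 0).hom ((HomologicalComplex.cyclesMap f 0).hom c) =
      (f.f 0).hom ((K.iCycles 0).hom c) := fun c =>
    congrArg (fun g => g.hom c) (HomologicalComplex.cyclesMap_i f 0)
  have hiinj : Function.Injective (L.iCycles 0).hom :=
    (ModuleCat.mono_iff_injective _).1 inferInstance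
  have hec : ∀ r, e.hom.hom (e.inv.hom r) = r := fun r =>
    congrArg (fun g => g.hom r) e.inv_hom_id
  have hce : ∀ r, e.inv.hom (e.hom.hom r) = r := fun r =>
    congrArg (fun g => g.hom r) e.hom_inv_id
  refine ⟨(f.f 0 ≫ e.hom).hom, ?_, ?_, ?_, ?_⟩
  · intro t
    have h1 : K.d (-1) 0 ≫ f.f 0 = 0 := by rw [← f.comm, hLd, comp_zero]
    have h2 : K.d (-1) 0 ≫ f.f 0 ≫ e.hom = 0 := by rw [← Category.assoc, h1, zero_comp]
    exact congrArg (fun g => g.hom t) h2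
  · obtain ⟨c', hc'⟩ := (cyc_iff L 0 1 (by norm_num) (e.inv.hom (1 : R))).1 (by rw [hLd]; rfl)
    obtain ⟨h, hh⟩ := hbij.2 ((L.homologyπ 0).hom c')
    obtain ⟨c, rfl⟩ := pi_surj K 0 h
    rw [← hnat, ← sub_eq_zero, ← map_sub] at hh
    obtain ⟨u, hu⟩ := (hom_iff L (-1) 0 (by norm_num) _).1 hh
    rw [hLd, map_sub, hci, hc'] at hu
    refine ⟨(K.iCycles 0).hom c, (cyc_iff K 0 1 (by norm_num) _).2 ⟨c, rfl⟩, ?_⟩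
    have hu' : (f.f 0).hom ((K.iCycles 0).hom c) = e.inv.hom (1 : R) := (sub_eq_zero.1 hu.symm)
    have := congrArg e.hom.hom hu'
    rw [hec] at this
    exact this
  · intro n hn t ht
    have hLe : L.ExactAt n := hLx n hn
    have hKe : K.ExactAt n := (quasiIsoAt_iff_exactAt' f n hLe).1 inferInstance
    have hz : IsZero (K.homology n) := hKe.isZero_homology
    have := ModuleCat.subsingleton_of_isZero hz
    obtain ⟨c, rfl⟩ := (cyc_iff K n _ rfl t).1 ht
    exact (hom_iff K (n-1) n (by omega) c).1 (Subsingleton.elim _ _)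
  · intro t ht hF
    obtain ⟨c, rfl⟩ := (cyc_iff K 0 1 (by norm_num) t).1 ht
    have h0 : (f.f 0).hom ((K.iCycles 0).hom c) = 0 := by
      have : e.hom.hom ((f.f 0).hom ((K.iCycles 0).hom c)) = 0 := hF
      rw [← hce ((f.f 0).hom ((K.iCycles 0).hom c)), this, map_zero]
    rw [← hci] at h0
    have h1 : (HomologicalComplex.cyclesMap f 0).hom c = 0 := hiinj (by rw [h0, map_zero])
    refine (hom_iff K (-1) 0 (by norm_num) c).1 (hbij.1 ?_)
    rw [← hnat, h1, map_zero, map_zero]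

variable (x y : HomologicalComplex (ModuleCat R) (ComplexShape.up ℤ))

lemma exists_tdata (f : HomologicalComplex.tensorObj x y ⟶
        𝟙_ (HomologicalComplex (ModuleCat R) (ComplexShape.up ℤ))) [QuasiIso f] :
    Nonempty (TData R (fun i => x.X i) (fun i => y.X i) (fun i j => (x.d i j).hom)
      (fun i j => (y.d i j).hom) (fun n => (HomologicalComplex.tensorObj x y).X n)) := by
  obtain ⟨F, hF, ⟨z, hz, hz1⟩, hex, hex0⟩ := qi (HomologicalComplex.tensorObj x y) _ f
    (HomologicalComplex.singleObjXSelf (ComplexShape.up ℤ) 0 (ModuleCat.of R R))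
    (fun i j => HomologicalComplex.single_obj_d _ _ _ _ _)
    (fun n hn => HomologicalComplex.exactAt_single_obj _ _ _ _ hn)
  refine ⟨{
    dxx := fun i a => congrArg (fun g => g.hom a) (x.d_comp_d i (i+1) (i+1+1))
    dyy := fun i a => congrArg (fun g => g.hom a) (y.d_comp_d i (i+1) (i+1+1))
    δ := fun n n' => ((HomologicalComplex.tensorObj x y).d n n').hom
    ι := fun i j n h => (HomologicalComplex.ιTensorObj x y i j n h).hom
    desc := ?_
    hom_ext := ?_
    δι := ?_
    F := F
    Fδ := hF
    z0 := z
    δz0 := hz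
    Fz0 := hz1
    ex := hex
    ex0 := hex0 }⟩
  · intro n B _ _ g
    let g' : ∀ (i j : ℤ) (_ : ComplexShape.π (ComplexShape.up ℤ) (ComplexShape.up ℤ)
        (ComplexShape.up ℤ) ⟨i, j⟩ = n),
        ((curriedTensor (ModuleCat R)).obj (x.X i)).obj (y.X j) ⟶ ModuleCat.of R B :=
      fun i j h => ModuleCat.ofHom (g i j h)
    refine ⟨(HomologicalComplex.mapBifunctorDesc g').hom, fun i j h t => ?_⟩
    exact congrArg (fun g => g.hom t) (HomologicalComplex.ι_mapBifunctorDesc g' i j h)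
  · intro n B _ _ g h H
    have : ModuleCat.ofHom g = ModuleCat.ofHom h := by
      apply HomologicalComplex.mapBifunctor.hom_ext
      intro i j hij
      apply ModuleCat.hom_ext
      exact TensorProduct.ext' (H i j hij)
    intro t
    exact congrArg (fun g => g.hom t) this
  · intro i j n n' h hn a c
    have key : HomologicalComplex.ιTensorObj x y i j n h ≫
        (HomologicalComplex.tensorObj x y).d n n' =
        (((curriedTensor (ModuleCat R)).map (x.d i (i+1))).app (y.X j) ≫
          HomologicalComplex.ιTensorObj x y (i+1) j n' (by omega)) +
        i.negOnePow • (((curriedTensor (ModuleCat R)).obj (x.X i)).map (y.d j (j+1)) ≫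
          HomologicalComplex.ιTensorObj x y i (j+1) n' (by omega)) := by
      rw [HomologicalComplex.mapBifunctor.d_eq, Preadditive.comp_add,
        HomologicalComplex.mapBifunctor.ι_D₁, HomologicalComplex.mapBifunctor.ι_D₂,
        HomologicalComplex.mapBifunctor.d₁_eq x y (curriedTensor (ModuleCat R)) (ComplexShape.up ℤ)
          (rfl : (ComplexShape.up ℤ).Rel i (i+1)) j n' (by change i + 1 + j = n'; omega),
        HomologicalComplex.mapBifunctor.d₂_eq x y (curriedTensor (ModuleCat R)) (ComplexShape.up ℤ)
          i (rfl : (ComplexShape.up ℤ).Rel j (j+1)) n' (by change i + (j + 1) = n'; omega)]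
      congr 1
      exact one_smul _ _
    have k2 := congrArg (fun g => g.hom (a ⊗ₜ c)) key
    refine k2.trans ?_
    rw [sg, Int.cast_smul_eq_zsmul]
    rfl

lemma comp_lmap {A B : ℤ → Type} [∀ i, AddCommGroup (A i)] [∀ i, Module R (A i)]
    [∀ i, AddCommGroup (B i)] [∀ i, Module R (B i)] (g : ∀ i, A i →ₗ[R] B i)
    (a : DirectSum ℤ A) (i : ℤ) : DirectSum.lmap g a i = g i (a i) := by
  rfl

lemma lift_dsum {A B : ℤ → Type} [∀ i, AddCommGroup (A i)] [∀ i, Module R (A i)]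
    [∀ i, AddCommGroup (B i)] [∀ i, Module R (B i)] (P : ∀ i, A i → B i → Prop)
    (h0 : ∀ i, P i 0 0) (b : DirectSum ℤ B) (h : ∀ i, ∃ a, P i a (b i)) :
    ∃ a : DirectSum ℤ A, ∀ i, P i (a i) (b i) := by
  classical
  choose g hg using h
  refine ⟨DFinsupp.mk b.support (fun i => g i), fun i => ?_⟩
  by_cases hi : i ∈ b.support
  · rw [DFinsupp.mk_of_mem hi]; exact hg i
  · rw [DFinsupp.mk_of_notMem hi, DFinsupp.notMem_support_iff.1 hi]; exact h0 i

lemma gd_apply {A : ℤ → Type} [∀ i, AddCommGroup (A i)] [∀ i, Module R (A i)]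
    (dx : ∀ i j, A i →ₗ[R] A j) (w : DirectSum ℤ A) (k i : ℤ) (h : k + 1 = i) :
    gd A dx w i = dx k i (w k) := by
  subst h
  refine gext (g := DirectSum.component R ℤ A (k+1) ∘ₗ gd A dx)
    (h := dx k (k+1) ∘ₗ DirectSum.component R ℤ A k) (fun j a => ?_) w
  simp only [LinearMap.comp_apply, gd_lof]
  by_cases hj : j = k
  · subst hj; rw [DirectSum.component.lof_self, DirectSum.component.lof_self]
  · rw [DirectSum.component.of, DirectSum.component.of, dif_neg (by omega), dif_neg (by omega),
      map_zero]

lemma finite_dsum {A : ℤ → Type} [∀ i, AddCommGroup (A i)] [∀ i, Module R (A i)]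
    [∀ i, Module.Finite R (A i)] (a b : ℤ)
    (hA : ∀ i, (i < a ∨ b < i) → Subsingleton (A i)) : Module.Finite R (DirectSum ℤ A) := by
  let g : (∀ i : Finset.Icc a b, A i) →ₗ[R] DirectSum ℤ A :=
    ∑ i : Finset.Icc a b, DirectSum.lof R ℤ A i ∘ₗ LinearMap.proj i
  refine Module.Finite.of_surjective g fun w => ⟨fun i => w i, ?_⟩
  ext j
  simp only [g, LinearMap.sum_apply, LinearMap.comp_apply, LinearMap.proj_apply]
  have : ∀ v : DirectSum ℤ A, v j = DirectSum.component R ℤ A j v := fun _ => rfl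
  rw [this, map_sum]
  by_cases hj : j ∈ Finset.Icc a b
  · rw [Finset.sum_eq_single_of_mem ⟨j, hj⟩ (Finset.mem_univ _)]
    · exact DirectSum.component.lof_self ..
    · intro i _ hi
      rw [DirectSum.component.of, dif_neg (fun h => hi (Subtype.ext h))]
  · have := hA j (by simp at hj; omega)
    exact Subsingleton.elim _ _

lemma toData_d {A C : ℤ → Type} [∀ i, AddCommGroup (A i)] [∀ i, Module R (A i)]
    [∀ i, AddCommGroup (C i)] [∀ i, Module R (C i)]
    {dx : ∀ i j, A i →ₗ[R] A j} {dy : ∀ i j, C i →ₗ[R] C j}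
    {T : ℤ → Type} [∀ i, AddCommGroup (T i)] [∀ i, Module R (T i)]
    (S : TData R A C dx dy T) (a b : ℤ) (hA : ∀ i, (i < a ∨ b < i) → Subsingleton (A i)) :
    (S.toData a b hA).d = gd A dx := rfl

theorem main (hfg : ∀ i, Module.Finite R (x.X i)) (hproj : ∀ i, Module.Projective R (x.X i))
    (a b : ℤ) (hA : ∀ i, (i < a ∨ b < i) → Subsingleton (x.X i))
    (f : HomologicalComplex.tensorObj x y ⟶
        𝟙_ (HomologicalComplex (ModuleCat R) (ComplexShape.up ℤ))) [QuasiIso f] :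
    LocInv R (DirectSum ℤ fun i => x.homology i) := by
  obtain ⟨S⟩ := exists_tdata x y f
  have hfin := finite_dsum (R := R) (A := fun i => x.X i) a b hA
  have hpr : Module.Projective R (DirectSum ℤ fun i => x.X i) :=
    inferInstanceAs (Module.Projective R (Π₀ i, x.X i))
  have hinj : ∀ i, Function.Injective (x.iCycles i).hom := fun i =>
    (ModuleCat.mono_iff_injective _).1 inferInstance
  refine (S.toData a b hA).locInv
    (DirectSum.lmap (M := fun i => x.cycles i) (N := fun i => x.X i)
      fun i => (x.iCycles i).hom)
    (DirectSum.lmap (M := fun i => x.cycles i) (N := fun i => x.homology i)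
      fun i => (x.homologyπ i).hom) ?_ ?_ ?_
  · intro m
    obtain ⟨c, hc⟩ := lift_dsum (R := R) (A := fun i => x.cycles i) (B := fun i => x.homology i)
      (fun i c m => (x.homologyπ i).hom c = m) (fun i => map_zero _) m (fun i => pi_surj x i _)
    exact ⟨c, DFinsupp.ext fun i => (comp_lmap _ _ _).trans (hc i)⟩
  · intro w
    rw [toData_d]
    constructor
    · intro hw
      obtain ⟨c, hc⟩ := lift_dsum (R := R) (A := fun i => x.cycles i) (B := fun i => x.X i)
        (fun i c m => (x.iCycles i).hom c = m) (fun i => map_zero _) w (fun i => by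
          refine (cyc_iff x i (i+1) rfl _).1 ?_
          have := gd_apply (fun i j => (x.d i j).hom) w i (i+1) rfl
          rw [hw] at this
          exact this.symm)
      exact ⟨c, DFinsupp.ext fun i => (comp_lmap _ _ _).trans (hc i)⟩
    · rintro ⟨c, rfl⟩
      refine DFinsupp.ext fun i => ?_
      refine (gd_apply (fun i j => (x.d i j).hom) _ (i-1) i (by omega)).trans ?_
      refine (cyc_iff x (i-1) i (by omega) _).2 ⟨c (i-1), (comp_lmap (fun i => (x.iCycles i).hom) c _).symm⟩
  · intro c
    rw [toData_d]
    constructor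
    · intro hc
      obtain ⟨v, hv⟩ := lift_dsum (R := R) (A := fun i => x.X (i - 1)) (B := fun i => x.cycles i)
        (fun i u m => (x.d (i-1) i).hom u = (x.iCycles i).hom m)
        (fun i => by rw [map_zero, map_zero]) c (fun i => by
          refine (hom_iff x (i-1) i (by omega) _).1 ?_
          have := comp_lmap (R := R) (fun i => (x.homologyπ i).hom) c i
          rw [hc] at this
          exact this.symm)
      classical
      let w : DirectSum ℤ fun i => x.X i := DirectSum.toModule R ℤ _
        (fun i => DirectSum.lof R ℤ (fun i => x.X i) (i-1)) v
      have hw : ∀ i, w (i - 1) = v i := by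
        intro i
        refine gext (R := R) (A := fun i => x.X (i-1))
          (g := DirectSum.component R ℤ (fun i => x.X i) (i-1) ∘ₗ DirectSum.toModule R ℤ _
            (fun i => DirectSum.lof R ℤ (fun i => x.X i) (i-1)))
          (h := DirectSum.component R ℤ (fun i => x.X (i-1)) i) (fun j a => ?_) v
        simp only [LinearMap.comp_apply, DirectSum.toModule_lof]
        by_cases hj : j = i
        · subst hj; rw [DirectSum.component.lof_self, DirectSum.component.lof_self]
        · rw [DirectSum.component.of, DirectSum.component.of, dif_neg (by omega),
            dif_neg (by omega)]
      refine ⟨w, DFinsupp.ext fun i => ?_⟩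
      refine (gd_apply (fun i j => (x.d i j).hom) w (i-1) i (by omega)).trans ?_
      rw [hw, hv]
      exact (comp_lmap (fun i => (x.iCycles i).hom) c _).symm
    · rintro ⟨w, hw⟩
      refine DFinsupp.ext fun i => (comp_lmap _ _ _).trans ?_
      refine (hom_iff x (i-1) i (by omega) _).2 ⟨w (i-1), ?_⟩
      refine (gd_apply (fun i j => (x.d i j).hom) w (i-1) i (by omega)).symm.trans ?_
      rw [hw]
      exact comp_lmap _ _ _

end Cx
end Fausk

/-- let `x` be a perfect complex of `R`-modules (a bounded complex of
finitely generated projective modules) that is invertible: there is a complex `y` with a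
quasi-isomorphism `x ⊗ y → R[0]` (the tensor unit).  Then the total homology
`⊕ᵢ Hᵢ(x)` is an invertible `R`-module, each `Hᵢ(x)` is finitely generated projective,
and if `Spec R` is connected then the homology of `x` is nonzero in exactly one
degree `b`. -/
theorem stmt15 (R : Type) [CommRing R]
    (x : HomologicalComplex (ModuleCat R) (ComplexShape.up ℤ))
    (hfg : ∀ i, Module.Finite R (x.X i)) (hproj : ∀ i, Module.Projective R (x.X i))
    (hbdd : ∃ a b : ℤ, ∀ i, (i < a ∨ b < i) → IsZero (x.X i))
    (hinv : ∃ (y : HomologicalComplex (ModuleCat R) (ComplexShape.up ℤ))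
      (f : HomologicalComplex.tensorObj x y ⟶
        𝟙_ (HomologicalComplex (ModuleCat R) (ComplexShape.up ℤ))),
      QuasiIso f) :
    (∃ (N : Type) (_ : AddCommGroup N) (_ : Module R N),
        Nonempty (((DirectSum ℤ fun i => x.homology i) ⊗[R] N) ≃ₗ[R] R)) ∧
    (∀ i, Module.Finite R (x.homology i) ∧ Module.Projective R (x.homology i)) ∧
    (ConnectedSpace (PrimeSpectrum R) →
      ∃ b : ℤ, ¬ IsZero (x.homology b) ∧ ∀ i, i ≠ b → IsZero (x.homology i)) := by
  obtain ⟨a, b, hb⟩ := hbdd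
  obtain ⟨y, f, hf⟩ := hinv
  obtain ⟨h1, h2, h3⟩ := Fausk.conclude (fun i => x.homology i)
    (Fausk.main x y hfg hproj a b (fun i hi => ModuleCat.subsingleton_of_isZero (hb i hi)) f)
  refine ⟨h1, h2, fun hc => ?_⟩
  obtain ⟨b, hb, hb'⟩ := h3 hc
  refine ⟨b, fun hz => hb (ModuleCat.subsingleton_of_isZero hz), fun i hi => ?_⟩
  have := hb' i hi
  exact ModuleCat.isZero_of_subsingleton _
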